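/- arXiv:2506.09019 — 3 statements merged into one kernel-verified Lean document; each statement's English description precedes it below -/
import Mathlib

section
/- Let k be a field of characteristic 2, let m ≥ 1, set d = 2m − 1, and let e ≥ 0. Then (2^m − 1) · dim_k ( k[x_0,…,x_d] / (x_0^{2^e},…,x_d^{2^e}, x_0x_1 + x_2x_3 + ⋯ + x_{d−1}x_d) ) = 2^m · 2^{d·e} − 2^{(m−1)·e}. In particular the Hilbert–Kunz function of the odd-dimensional A_1 singularity in characteristic 2 is HK_e(R_{2,d}) = (2^m/(2^m−1))·2^{de} − (2^{m−1})^e/(2^m−1). -/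
open MvPolynomial

/-- The Hilbert–Kunz function of the hypersurface defined by `f` in `n` variables,
in characteristic `p`, at level `e`:
`dim_k k[x_0,…,x_{n-1}] / (x_0^{p^e},…,x_{n-1}^{p^e}, f)`. -/
noncomputable def HKfun (k : Type*) [Field k] (n p e : ℕ)
    (f : MvPolynomial (Fin n) k) : ℕ :=
  Module.finrank k
    (MvPolynomial (Fin n) k ⧸
      Ideal.span
        (Set.range (fun i : Fin n => (X i : MvPolynomial (Fin n) k) ^ p ^ e) ∪ {f}))

/-!
Multiplication by `u * v` splits `k[u, v] / (u ^ q, v ^ q)` into Jordan blocks of sizes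
`1, 1, 2, 2, …, q - 1, q - 1, q`. Taking the product over the `m` pairs of variables, the
Hilbert–Kunz length of `∑ i, u i * v i` becomes the sum, over all `m`-tuples `n` of block sizes, of
Han and Monsky's `D n = dim k[X] / (X i ^ n i, ∑ i, X i)`.

Let `Q ≥ n i` be a power of the characteristic. If `n i = Q`, the substitution `X i ↦ ∑ j, X j`
preserves the ideal `(X j ^ n j)`, so there all Jordan blocks of `∑ j, X j` have size `Q`. For
general `n i`, comparing with this case shows that the reflection `n i ↦ Q - n i` does not change
the number of Jordan blocks of size less than `Q`. For `Q = 2 * q`, once a block of size `0` is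
added to each list, reflection identifies the block sizes of `k[u, v] / (u ^ Q, v ^ Q)`, two to one,
with those of `k[u, v] / (u ^ q, v ^ q)`, and tuples of the latter sizes give no Jordan blocks of
size `Q`. Counting the blocks of size `Q` with the same reflection then yields the recursion
`L Q = 2 ^ (m - 1) * L q + Q ^ (2 * m - 1)` for the Hilbert–Kunz length `L`.
-/

theorem finrank_quotient_colon_add_finrank_quotient_sup {k A : Type*} [Field k] [CommRing A]
    [Algebra k A] (I : Ideal A) [Module.Finite k (A ⧸ I)] (x : A) :
    Module.finrank k (A ⧸ I.colon {x}) + Module.finrank k (A ⧸ I ⊔ Ideal.span {x}) =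
      Module.finrank k (A ⧸ I) := by
  let mulX : A →ₗ[A] A ⧸ I := LinearMap.toSpanSingleton A (A ⧸ I) (Ideal.Quotient.mk I x)
  have ker_mulX : LinearMap.ker mulX = I.colon {x} := by
    ext a
    rw [LinearMap.mem_ker, LinearMap.toSpanSingleton_apply, Submodule.mem_colon_singleton,
      ← Ideal.Quotient.eq_zero_iff_mem, smul_eq_mul, map_mul]
    rfl
  have range_mulX : LinearMap.range mulX =
      (Ideal.map (Ideal.Quotient.mk I) (Ideal.span {x})).restrictScalars A := by
    ext b
    rw [LinearMap.mem_range, Submodule.restrictScalars_mem, Ideal.map_span, Set.image_singleton,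
      Ideal.mem_span_singleton', Ideal.Quotient.mk_surjective.exists]
    rfl
  have colon_equiv_range : Module.finrank k (A ⧸ I.colon {x}) =
      Module.finrank k (Ideal.map (Ideal.Quotient.mk I) (Ideal.span {x})) := by
    rw [← ker_mulX]
    have e := mulX.quotKerEquivRange.trans (LinearEquiv.ofEq _ _ range_mulX)
    exact (e.restrictScalars k).finrank_eq
  rw [colon_equiv_range, add_comm,
    ← (DoubleQuot.quotQuotEquivQuotSupₐ k I (Ideal.span {x})).toLinearEquiv.finrank_eq]
  exact Submodule.finrank_quotient_add_finrank
    ((Ideal.map (Ideal.Quotient.mk I) (Ideal.span {x})).restrictScalars k)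

section PowIdeal

variable {R σ : Type*} [CommRing R]

/-- The monomial ideal `(X i ^ n i : i)`. -/
noncomputable def powIdeal (R : Type*) [CommRing R] {σ : Type*} (n : σ → ℕ) :
    Ideal (MvPolynomial σ R) :=
  Ideal.span (Set.range fun i => X i ^ n i)

theorem X_pow_mem_powIdeal {n : σ → ℕ} {i : σ} {a : ℕ} (h : n i ≤ a) :
    X i ^ a ∈ powIdeal R n :=
  Ideal.pow_mem_of_pow_mem _ (Ideal.subset_span ⟨i, rfl⟩) h

theorem mem_powIdeal_iff {n : σ → ℕ} {p : MvPolynomial σ R} :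
    p ∈ powIdeal R n ↔ ∀ s : σ →₀ ℕ, (∀ i, s i < n i) → coeff s p = 0 := by
  have span_monomials : powIdeal R n = Ideal.span
      ((fun s => monomial s (1 : R)) '' Set.range fun i => Finsupp.single i (n i)) := by
    simp only [powIdeal, X_pow_eq_monomial, ← Set.range_comp, Function.comp_def]
  simp only [span_monomials, mem_ideal_span_monomial_image, Set.exists_range_iff,
    Finsupp.single_le_iff, mem_support_iff]
  exact forall_congr' fun s => by rw [← not_imp_not]; push Not; rfl

theorem single_add_lt_iff_lt_update_sub [DecidableEq σ] {n : σ → ℕ} {i : σ} {a : ℕ} {s : σ →₀ ℕ} :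
    (∀ j, (Finsupp.single i a + s) j < n j) ↔ ∀ j, s j < Function.update n i (n i - a) j := by
  refine forall_congr' fun j => ?_
  rcases eq_or_ne j i with rfl | hj
  · rw [Finsupp.add_apply, Finsupp.single_eq_same, Function.update_self, Nat.lt_sub_iff_add_lt']
  · rw [Finsupp.add_apply, Finsupp.single_eq_of_ne hj, Function.update_of_ne hj, zero_add]

theorem X_pow_mul_mem_powIdeal_iff [DecidableEq σ] {n : σ → ℕ} {i : σ} {a : ℕ}
    {p : MvPolynomial σ R} :
    X i ^ a * p ∈ powIdeal R n ↔ p ∈ powIdeal R (Function.update n i (n i - a)) := by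
  simp only [mem_powIdeal_iff, X_pow_eq_monomial, ← single_add_lt_iff_lt_update_sub]
  constructor
  · intro h s hs
    rw [← one_mul (coeff s p), ← coeff_monomial_mul s (Finsupp.single i a)]
    exact h _ hs
  · intro h s hs
    by_cases has : Finsupp.single i a ≤ s
    · obtain ⟨t, rfl⟩ := exists_add_of_le has
      rw [coeff_monomial_mul, one_mul]
      exact h t hs
    · rw [coeff_monomial_mul', if_neg has]

theorem powIdeal_sup_span_X_pow [DecidableEq σ] {n : σ → ℕ} {i : σ} {a : ℕ} (ha : a ≤ n i) :
    powIdeal R n ⊔ Ideal.span {X i ^ a} = powIdeal R (Function.update n i a) := by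
  apply le_antisymm
  · rw [sup_le_iff, powIdeal, Ideal.span_le, Ideal.span_le, Set.singleton_subset_iff]
    refine ⟨?_, X_pow_mem_powIdeal (by simp)⟩
    rintro _ ⟨j, rfl⟩
    refine X_pow_mem_powIdeal ?_
    rcases eq_or_ne j i with rfl | hj
    · simpa using ha
    · simp [hj]
  · rw [powIdeal, Ideal.span_le]
    rintro _ ⟨j, rfl⟩
    rcases eq_or_ne j i with rfl | hj
    · simpa using Ideal.mem_sup_right (Ideal.mem_span_singleton_self _)
    · exact Ideal.mem_sup_left (X_pow_mem_powIdeal (by simp [hj]))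

variable (R) (n : σ → ℕ)

/-- Coordinates on `R[X] / (X i ^ n i : i)`: the coefficients of the monomials whose exponents
lie below `n`. -/
noncomputable def quotientPowIdealEquiv [Finite σ] :
    (MvPolynomial σ R ⧸ powIdeal R n) ≃ₗ[R] ((∀ i, Fin (n i)) → R) := by
  classical
  have := Fintype.ofFinite σ
  let exponent (s : ∀ i, Fin (n i)) : σ →₀ ℕ := Finsupp.equivFunOnFinite.symm fun i => (s i : ℕ)
  have exponent_injective : Function.Injective exponent := fun s t h =>
    funext fun i => Fin.ext (DFunLike.congr_fun h i)
  let coeffs : MvPolynomial σ R →ₗ[R] ((∀ i, Fin (n i)) → R) :=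
    LinearMap.pi fun s => lcoeff R (exponent s)
  have coeffs_surjective : Function.Surjective coeffs := fun c =>
    ⟨∑ s, monomial (exponent s) (c s), funext fun t => by
      simp [coeffs, coeff_monomial, exponent_injective.eq_iff]⟩
  have ker_coeffs : (powIdeal R n).restrictScalars R = LinearMap.ker coeffs := by
    ext p
    rw [Submodule.restrictScalars_mem, mem_powIdeal_iff, LinearMap.mem_ker, funext_iff]
    refine ⟨fun h s => h _ fun i => (s i).isLt, fun h s hs => ?_⟩
    have hexp : exponent (fun i => ⟨s i, hs i⟩) = s := Finsupp.ext fun i => rfl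
    rw [← hexp]
    exact h _
  exact (Submodule.Quotient.restrictScalarsEquiv R _).symm ≪≫ₗ
    Submodule.quotEquivOfEq _ _ ker_coeffs ≪≫ₗ coeffs.quotKerEquivOfSurjective coeffs_surjective

instance [Finite σ] : Module.Finite R (MvPolynomial σ R ⧸ powIdeal R n) :=
  .equiv (quotientPowIdealEquiv R n).symm

instance [Finite σ] (I : Ideal (MvPolynomial σ R)) :
    Module.Finite R (MvPolynomial σ R ⧸ powIdeal R n ⊔ I) :=
  Module.Finite.of_surjective (Ideal.Quotient.factorₐ R le_sup_left).toLinearMap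
    (Ideal.Quotient.factor_surjective le_sup_left)

theorem finrank_quotient_powIdeal [Fintype σ] [StrongRankCondition R] :
    Module.finrank R (MvPolynomial σ R ⧸ powIdeal R n) = ∏ i, n i := by
  classical
  rw [(quotientPowIdealEquiv R n).finrank_eq, Module.finrank_fintype_fun_eq_card, Fintype.card_pi]
  simp only [Fintype.card_fin]

end PowIdeal

section HilbertKunzLength

variable {k σ : Type*} [Field k]

/-- The dimension of `k[σ] / (X t ^ q, f)`, which for `q` a power of the characteristic is a value
of the Hilbert–Kunz function of `f`. -/
noncomputable def hilbertKunzLength (q : ℕ) (f : MvPolynomial σ k) : ℕ :=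
  Module.finrank k (MvPolynomial σ k ⧸ (powIdeal k fun _ : σ => q) ⊔ Ideal.span {f})

theorem HKfun_eq_hilbertKunzLength (n p e : ℕ) (f : MvPolynomial (Fin n) k) :
    HKfun k n p e f = hilbertKunzLength (p ^ e) f := by
  rw [HKfun, hilbertKunzLength, Ideal.span_union, powIdeal]

theorem hilbertKunzLength_one [Finite σ] {f : MvPolynomial σ k} (hf : constantCoeff f = 0) :
    hilbertKunzLength 1 f = 1 := by
  have := Fintype.ofFinite σ
  have mem_powIdeal_one : f ∈ powIdeal k fun _ : σ => 1 := mem_powIdeal_iff.2 fun s hs => by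
    have s_eq_zero : s = 0 := Finsupp.ext fun t => Nat.lt_one_iff.1 (hs t)
    rwa [s_eq_zero, ← constantCoeff_eq]
  rw [hilbertKunzLength, sup_eq_left.2 ((Ideal.span_singleton_le_iff_mem _).2 mem_powIdeal_one),
    finrank_quotient_powIdeal, Finset.prod_const_one]

end HilbertKunzLength

section Shear

variable {R ι : Type*} [CommRing R] [DecidableEq ι] {i : ι} {g : MvPolynomial ι R}

theorem bind₁_update_X_of_mem_supported (hg : g ∈ supported R {i}ᶜ) (v : MvPolynomial ι R) :
    bind₁ (Function.update X i v) g = g := by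
  have eqOn : Set.EqOn (bind₁ (Function.update X i v)) (AlgHom.id R _) (supported R {i}ᶜ) := by
    rw [supported, AlgHom.eqOn_adjoin_iff]
    rintro _ ⟨j, hj, rfl⟩
    rw [bind₁_X_right, Function.update_of_ne hj, AlgHom.id_apply]
  exact eqOn hg

/-- The automorphism of `R[X]` that sends `X i` to `X i + g` and fixes the other variables, where
`g` does not involve `X i`. -/
noncomputable def shear (i : ι) (g : MvPolynomial ι R) (hg : g ∈ supported R {i}ᶜ) :
    MvPolynomial ι R ≃ₐ[R] MvPolynomial ι R :=
  .ofAlgHom (bind₁ (Function.update X i (X i + g))) (bind₁ (Function.update X i (X i - g)))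
    (algHom_ext fun j => by
      rcases eq_or_ne j i with rfl | hj
      · simp [bind₁_update_X_of_mem_supported hg]
      · simp [hj])
    (algHom_ext fun j => by
      rcases eq_or_ne j i with rfl | hj
      · simp [bind₁_update_X_of_mem_supported hg]
      · simp [hj])

theorem map_bind₁_update_powIdeal_le (p : ℕ) [ExpChar R p] {s : ℕ} {n : ι → ℕ} (hi : n i = p ^ s)
    (hg : g ^ p ^ s ∈ powIdeal R n) :
    (powIdeal R n).map (bind₁ (Function.update X i (X i + g))) ≤ powIdeal R n := by
  rw [powIdeal, Ideal.map_span, Ideal.span_le]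
  rintro _ ⟨_, ⟨j, rfl⟩, rfl⟩
  rw [SetLike.mem_coe, map_pow, bind₁_X_right]
  rcases eq_or_ne j i with rfl | hj
  · rw [Function.update_self, hi, add_pow_expChar_pow]
    exact Ideal.add_mem _ (X_pow_mem_powIdeal hi.le) hg
  · rw [Function.update_of_ne hj]
    exact X_pow_mem_powIdeal le_rfl

theorem map_shear_powIdeal (p : ℕ) [ExpChar R p] {s : ℕ} {n : ι → ℕ} (hi : n i = p ^ s)
    (hg : g ∈ supported R {i}ᶜ) (hgs : g ^ p ^ s ∈ powIdeal R n) :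
    (powIdeal R n).map (shear i g hg) = powIdeal R n := by
  refine le_antisymm (map_bind₁_update_powIdeal_le p hi hgs) ?_
  have neg_g_pow : (-g) ^ p ^ s ∈ powIdeal R n := by
    rw [neg_pow]
    exact Ideal.mul_mem_left _ _ hgs
  intro f hf
  rw [← (shear i g hg).apply_symm_apply f]
  refine Ideal.mem_map_of_mem _ (map_bind₁_update_powIdeal_le p hi neg_g_pow ?_)
  rw [← sub_eq_add_neg]
  exact Ideal.mem_map_of_mem _ hf

end Shear

section SumOfVariables

variable {R ι : Type*} [CommRing R] {n : ι → ℕ} {p s : ℕ} [ExpChar R p]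

theorem sum_X_pow_mem_powIdeal (hn : ∀ j, n j ≤ p ^ s) (J : Finset ι) :
    (∑ j ∈ J, X j) ^ p ^ s ∈ powIdeal R n := by
  rw [sum_pow_char_pow p]
  exact Ideal.sum_mem _ fun j _ => X_pow_mem_powIdeal (hn j)

variable [Fintype ι]

/-- The shear of `R[X]` that sends `X i` to the sum of all variables. -/
noncomputable def sumShear (R : Type*) [CommRing R] [DecidableEq ι] (i : ι) :
    MvPolynomial ι R ≃ₐ[R] MvPolynomial ι R :=
  shear i (∑ j ∈ Finset.univ.erase i, X j) <|
    sum_mem fun j hj => Algebra.subset_adjoin ⟨j, Finset.ne_of_mem_erase hj, rfl⟩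

theorem sumShear_X_self [DecidableEq ι] (i : ι) : sumShear R i (X i) = ∑ j, X j := by
  rw [← Finset.add_sum_erase _ _ (Finset.mem_univ i)]
  exact (bind₁_X_right (R := R) _ i).trans (Function.update_self ..)

theorem map_sumShear_powIdeal [DecidableEq ι] (hn : ∀ j, n j ≤ p ^ s) {i : ι} (hi : n i = p ^ s) :
    (powIdeal R n).map (sumShear R i) = powIdeal R n :=
  map_shear_powIdeal p hi _ (sum_X_pow_mem_powIdeal hn _)

theorem map_sumShear_powIdeal_update_one [DecidableEq ι] (hn : ∀ j, n j ≤ p ^ s) {i : ι}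
    (hi : n i = p ^ s) :
    (powIdeal R (Function.update n i 1)).map (sumShear R i) =
      powIdeal R n ⊔ Ideal.span {∑ j, X j} := by
  have one_le : 1 ≤ n i := hi ▸ Nat.one_le_pow _ _ (expChar_pos R p)
  rw [← powIdeal_sup_span_X_pow one_le, Ideal.map_sup, map_sumShear_powIdeal hn hi, Ideal.map_span,
    Set.image_singleton, pow_one, sumShear_X_self]

theorem sum_X_pow_sub_one_mul_mem_powIdeal_iff (hn : ∀ j, n j ≤ p ^ s) {i : ι} (hi : n i = p ^ s)
    {f : MvPolynomial ι R} :
    (∑ j, X j) ^ (p ^ s - 1) * f ∈ powIdeal R n ↔ f ∈ powIdeal R n ⊔ Ideal.span {∑ j, X j} := by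
  classical
  obtain ⟨g, rfl⟩ := (sumShear R i).surjective f
  have one_le : 1 ≤ p ^ s := Nat.one_le_pow _ _ (expChar_pos R p)
  rw [← map_sumShear_powIdeal_update_one hn hi, ← map_sumShear_powIdeal hn hi, ← sumShear_X_self i,
    ← map_pow, ← map_mul, Ideal.mem_map_of_equiv, Ideal.mem_map_of_equiv]
  simp only [EmbeddingLike.apply_eq_iff_eq, exists_eq_right, X_pow_mul_mem_powIdeal_iff, hi,
    Nat.sub_sub_self one_le]

end SumOfVariables

section Reflection

variable (k : Type*) [Field k] {ι : Type*} [Fintype ι]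

/-- Han and Monsky's `D`: the dimension of `k[X] / (X i ^ n i, ∑ i, X i)`, that is, the number of
Jordan blocks of multiplication by `∑ i, X i` on `k[X] / (X i ^ n i)`. -/
noncomputable def sumBlocks (n : ι → ℕ) : ℕ :=
  Module.finrank k (MvPolynomial ι k ⧸ powIdeal k n ⊔ Ideal.span {∑ j, X j})

/-- The rank of multiplication by `(∑ i, X i) ^ (Q - 1)` on `k[X] / (X i ^ n i)`, written as the
dimension of `k[X]` modulo its annihilator. When `(∑ i, X i) ^ Q` acts as zero, this is the number
of Jordan blocks of size `Q` of multiplication by `∑ i, X i`. -/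
noncomputable def sumTopBlocks (Q : ℕ) (n : ι → ℕ) : ℕ :=
  Module.finrank k (MvPolynomial ι k ⧸ (powIdeal k n).colon {(∑ j, X j) ^ (Q - 1)})

/-- The number of Jordan blocks of size less than `Q` of multiplication by `∑ i, X i` on
`k[X] / (X i ^ n i)`. -/
noncomputable def sumShortBlocks (Q : ℕ) (n : ι → ℕ) : ℤ :=
  sumBlocks k n - sumTopBlocks k Q n

variable {k} {p s : ℕ} [ExpChar k p] {n : ι → ℕ}

theorem sumTopBlocks_eq_zero {Q : ℕ} (hn : ∀ j, n j ≤ p ^ s) (hQ : p ^ s < Q) :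
    sumTopBlocks k Q n = 0 := by
  have colon_eq_top : (powIdeal k n).colon {(∑ j, X j) ^ (Q - 1)} = ⊤ := by
    rw [Ideal.eq_top_iff_one, Submodule.mem_colon_singleton, one_smul]
    exact Ideal.pow_mem_of_pow_mem _ (sum_X_pow_mem_powIdeal hn _) (Nat.le_sub_one_of_lt hQ)
  rw [sumTopBlocks, colon_eq_top]
  exact Module.finrank_zero_of_subsingleton

variable [DecidableEq ι]

theorem sumBlocks_of_apply_eq (hn : ∀ j, n j ≤ p ^ s) {i : ι} (hi : n i = p ^ s) :
    sumBlocks k n = ∏ j ∈ Finset.univ.erase i, n j := by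
  rw [sumBlocks, ← (Ideal.quotientEquivAlg _ _ (sumShear k i)
    (map_sumShear_powIdeal_update_one hn hi).symm).toLinearEquiv.finrank_eq,
    finrank_quotient_powIdeal, ← Finset.mul_prod_erase _ _ (Finset.mem_univ i),
    Function.update_self, one_mul, Finset.prod_update_of_notMem (Finset.notMem_erase i _)]

theorem powIdeal_update_sub_colon (hn : ∀ j, n j ≤ p ^ s) (i : ι) :
    (powIdeal k (Function.update n i (p ^ s - n i))).colon {(∑ j, X j) ^ (p ^ s - 1)} =
      (powIdeal k (Function.update n i (p ^ s)) ⊔ Ideal.span {∑ j, X j}).colon {X i ^ n i} := by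
  have update_le : ∀ j, Function.update n i (p ^ s) j ≤ p ^ s :=
    (update_le_iff (y := n) (x := fun _ => p ^ s)).2 ⟨le_rfl, fun j _ => hn j⟩
  ext f
  rw [Submodule.mem_colon_singleton, Submodule.mem_colon_singleton, smul_eq_mul, smul_eq_mul,
    ← sum_X_pow_sub_one_mul_mem_powIdeal_iff update_le (Function.update_self ..),
    mul_comm f, mul_comm f, mul_left_comm, X_pow_mul_mem_powIdeal_iff, Function.update_self,
    Function.update_idem]

theorem sumBlocks_add_sumTopBlocks_update_sub (hn : ∀ j, n j ≤ p ^ s) (i : ι) :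
    sumBlocks k n + sumTopBlocks k (p ^ s) (Function.update n i (p ^ s - n i)) =
      ∏ j ∈ Finset.univ.erase i, n j := by
  set N := Function.update n i (p ^ s) with hN
  have update_le : ∀ j, N j ≤ p ^ s :=
    (update_le_iff (y := n) (x := fun _ => p ^ s)).2 ⟨le_rfl, fun j _ => hn j⟩
  have sup_span : powIdeal k N ⊔ Ideal.span {∑ j, X j} ⊔ Ideal.span {X i ^ n i} =
      powIdeal k n ⊔ Ideal.span {∑ j, X j} := by
    rw [sup_right_comm, powIdeal_sup_span_X_pow, hN, Function.update_idem, Function.update_eq_self]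
    rw [hN, Function.update_self]
    exact hn i
  rw [sumTopBlocks, powIdeal_update_sub_colon hn, add_comm, sumBlocks, ← sup_span,
    finrank_quotient_colon_add_finrank_quotient_sup]
  exact (sumBlocks_of_apply_eq update_le (Function.update_self ..)).trans
    (Finset.prod_update_of_notMem (Finset.notMem_erase i _) ..)

theorem sumShortBlocks_update_sub (hn : ∀ j, n j ≤ p ^ s) (i : ι) :
    sumShortBlocks k (p ^ s) (Function.update n i (p ^ s - n i)) = sumShortBlocks k (p ^ s) n := by
  have h := sumBlocks_add_sumTopBlocks_update_sub (k := k) hn i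
  set n' := Function.update n i (p ^ s - n i) with hn'
  have hn'_le : ∀ j, n' j ≤ p ^ s :=
    (update_le_iff (y := n) (x := fun _ => p ^ s)).2 ⟨Nat.sub_le .., fun j _ => hn j⟩
  have reflect_twice : Function.update n' i (p ^ s - n' i) = n := by
    rw [hn', Function.update_self, Nat.sub_sub_self (hn i), Function.update_idem,
      Function.update_eq_self]
  have prod_eq : ∏ j ∈ Finset.univ.erase i, n' j = ∏ j ∈ Finset.univ.erase i, n j :=
    Finset.prod_update_of_notMem (Finset.notMem_erase i _) ..
  have h' := sumBlocks_add_sumTopBlocks_update_sub (k := k) hn'_le i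
  rw [reflect_twice, prod_eq, ← h] at h'
  rw [sumShortBlocks, sumShortBlocks]
  omega

end Reflection

section QuotientPi

variable {k P R W : Type*} [Field k] [AddCommGroup P] [Module k P] [AddCommGroup R] [Module k R]
  [Fintype W] {Λ : (W → P) →ₗ[k] R} {J : W → Submodule k P} {I : Submodule k R}
  [∀ w, Module.Finite k (P ⧸ J w)]

theorem finrank_quotient_pi :
    Module.finrank k ((W → P) ⧸ Submodule.pi Set.univ J) = ∑ w, Module.finrank k (P ⧸ J w) := by
  classical
  rw [(Submodule.quotientPi J).finrank_eq, Module.finrank_pi_fintype]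

theorem finrank_quotient_eq_sum (hΛ : I ⊔ LinearMap.range Λ = ⊤)
    (hmem : ∀ p, Λ p ∈ I ↔ ∀ w, p w ∈ J w) :
    Module.finrank k (R ⧸ I) = ∑ w, Module.finrank k (P ⧸ J w) := by
  have ker_eq : LinearMap.ker (I.mkQ ∘ₗ Λ) = Submodule.pi Set.univ J := by
    ext p
    simp [hmem]
  have range_eq : LinearMap.range (I.mkQ ∘ₗ Λ) = ⊤ := by
    rw [LinearMap.range_comp, Submodule.map_mkQ_eq_top, hΛ]
  rw [← finrank_quotient_pi, ← ker_eq]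
  exact ((I.mkQ ∘ₗ Λ).quotKerEquivOfSurjective (LinearMap.range_eq_top.1 range_eq)).finrank_eq.symm

theorem mem_iff_forall_mem_of_finrank_eq_sum (hΛ : I ⊔ LinearMap.range Λ = ⊤)
    (hmem : ∀ p, (∀ w, p w ∈ J w) → Λ p ∈ I) [Module.Finite k (R ⧸ I)]
    (hrank : Module.finrank k (R ⧸ I) = ∑ w, Module.finrank k (P ⧸ J w)) (p : W → P) :
    Λ p ∈ I ↔ ∀ w, p w ∈ J w := by
  classical
  have pi_le : Submodule.pi Set.univ J ≤ I.comap Λ := fun p hp => hmem p fun w => hp w trivial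
  have : Module.Finite k ((W → P) ⧸ Submodule.pi Set.univ J) :=
    .equiv (Submodule.quotientPi J).symm
  have surj : Function.Surjective (Submodule.mapQ _ I Λ pi_le) := by
    rw [← LinearMap.range_eq_top, Submodule.range_mapQ, Submodule.map_mkQ_eq_top, hΛ]
  have inj : Function.Injective (Submodule.mapQ _ I Λ pi_le) :=
    (LinearMap.injective_iff_surjective_of_finrank_eq_finrank
      (finrank_quotient_pi.trans hrank.symm)).2 surj
  refine ⟨fun hp w => ?_, hmem p⟩
  have mk_eq_zero : (Submodule.pi Set.univ J).mkQ p = 0 :=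
    inj (by simpa using hp)
  exact (Submodule.Quotient.mk_eq_zero _).1 mk_eq_zero w trivial

end QuotientPi

section Blocks

variable {q : ℕ}

/-- The sizes of the Jordan blocks of multiplication by `u * v` on `k[u, v] / (u ^ q, v ^ q)`:
`Sum.inl i` stands for the block generated by `u ^ i`, and `Sum.inr i` for the one generated by
`v ^ (q - i)`, which is zero for `i = 0`. -/
def blockSize : Fin q ⊕ Fin q → ℕ :=
  Sum.elim (fun i => q - i) (fun i => i)

/-- The generator of the Jordan block of size `blockSize w`. -/
def blockGenerator {A : Type*} [Monoid A] (u v : A) : Fin q ⊕ Fin q → A :=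
  Sum.elim (fun i => u ^ (i : ℕ)) (fun i => v ^ (q - i))

theorem blockSize_le (w : Fin q ⊕ Fin q) : blockSize w ≤ q := by
  rcases w with i | i
  · exact Nat.sub_le ..
  · exact i.isLt.le

theorem blockSize_swap (w : Fin q ⊕ Fin q) : blockSize w.swap = q - blockSize w := by
  rcases w with i | i
  · exact (Nat.sub_sub_self i.isLt.le).symm
  · rfl

theorem sum_blockSize (q : ℕ) : ∑ w : Fin q ⊕ Fin q, blockSize w = q ^ 2 := by
  simp only [Fintype.sum_sum_type, blockSize, Sum.elim_inl, Sum.elim_inr, ← Finset.sum_add_distrib]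
  rw [Finset.sum_congr rfl fun i _ => Nat.sub_add_cancel i.isLt.le]
  simp [sq]

/-- Each block size `a` for `q` occurs for `q + q` twice up to the reflection
`a ↦ q + q - a`, once as `a` (for `false`) and once as its reflection (for `true`). -/
def doubleBlock : Bool × (Fin q ⊕ Fin q) → Fin (q + q) ⊕ Fin (q + q)
  | (false, w) => w.map (Fin.natAdd q) (Fin.castAdd q)
  | (true, w) => (w.map (Fin.natAdd q) (Fin.castAdd q)).swap

theorem blockSize_doubleBlock (b : Bool) (w : Fin q ⊕ Fin q) :
    blockSize (doubleBlock (b, w)) = if b then q + q - blockSize w else blockSize w := by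
  have blockSize_map :
      blockSize (w.map (Fin.natAdd q) (Fin.castAdd q)) = blockSize w := by
    rcases w with i | i
    · exact Nat.add_sub_add_left q q i
    · rfl
  cases b
  · exact blockSize_map
  · exact (blockSize_swap _).trans (congrArg (q + q - ·) blockSize_map)

theorem doubleBlock_bijective (q : ℕ) : Function.Bijective (doubleBlock (q := q)) := by
  refine (Fintype.bijective_iff_injective_and_card _).2 ⟨?_, ?_⟩
  · rintro ⟨_ | _, i | i⟩ ⟨_ | _, j | j⟩ h <;> simp [doubleBlock, Fin.ext_iff] at h ⊢ <;> omega
  · simp only [Fintype.card_prod, Fintype.card_bool, Fintype.card_sum, Fintype.card_fin, two_mul]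

variable {A : Type*} [CommMonoid A] (u v : A)

theorem pow_dvd_blockGenerator_mul_pow (w : Fin q ⊕ Fin q) :
    u ^ q ∣ blockGenerator u v w * (u * v) ^ blockSize w ∨
      v ^ q ∣ blockGenerator u v w * (u * v) ^ blockSize w := by
  rw [mul_pow]
  rcases w with i | i
  · left
    rw [← mul_assoc]
    refine Dvd.intro (v ^ (q - i)) (congrArg (· * _) ?_)
    exact (pow_mul_pow_sub u i.isLt.le).symm
  · right
    rw [mul_left_comm]
    refine Dvd.intro_left (u ^ (i : ℕ)) (congrArg (_ * ·) ?_)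
    exact (pow_sub_mul_pow v i.isLt.le).symm

theorem exists_eq_blockGenerator_mul_pow {a b : ℕ} (ha : a < q) (hb : b < q) :
    ∃ (w : Fin q ⊕ Fin q) (c : ℕ), u ^ a * v ^ b = blockGenerator u v w * (u * v) ^ c := by
  simp only [mul_pow]
  rcases le_or_gt b a with hba | hab
  · refine ⟨.inl ⟨a - b, by omega⟩, b, ?_⟩
    rw [← mul_assoc]
    exact congrArg (· * _) (pow_sub_mul_pow u hba).symm
  · refine ⟨.inr ⟨q - (b - a), by omega⟩, a, ?_⟩
    have exponent : q - (q - (b - a)) = b - a := by omega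
    rw [mul_left_comm]
    refine congrArg (_ * ·) ((pow_sub_mul_pow v hab.le).symm.trans ?_)
    simp only [blockGenerator, Sum.elim_inr, exponent]

end Blocks

instance {k A : Type*} [CommRing k] [CommRing A] [Algebra k A] (I : Ideal A)
    [Module.Finite k (A ⧸ I)] : Module.Finite k (A ⧸ I.restrictScalars k) :=
  .equiv (Submodule.Quotient.restrictScalarsEquiv k I).symm

section SumOfProducts

variable {R ι σ : Type*} [CommRing R] [Fintype ι] [DecidableEq ι] {q : ℕ} (x y : ι → σ)

/-- Let `X i` in `R[ι]` act on `R[σ]` as `X (x i) * X (y i)`. This is the `R[ι]`-linear map that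
sends the basis vector indexed by `w` to `∏ i, blockGenerator (X (x i)) (X (y i)) (w i)`. If `x` and
`y` together enumerate `σ`, it presents `R[σ] / (X t ^ q)` as the direct sum of the cyclic modules
`R[ι] / (X i ^ blockSize (w i))`. -/
noncomputable def assembleBlocks (R : Type*) [CommRing R] (q : ℕ) :
    ((ι → Fin q ⊕ Fin q) → MvPolynomial ι R) →ₗ[R] MvPolynomial σ R :=
  ∑ w, LinearMap.mulLeft R (∏ i, blockGenerator (X (x i)) (X (y i)) (w i)) ∘ₗ
    (bind₁ fun i => X (x i) * X (y i)).toLinearMap ∘ₗ LinearMap.proj w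

theorem assembleBlocks_apply (p : (ι → Fin q ⊕ Fin q) → MvPolynomial ι R) :
    assembleBlocks x y R q p = ∑ w, (∏ i, blockGenerator (X (x i)) (X (y i)) (w i)) *
      bind₁ (fun i => X (x i) * X (y i)) (p w) := by
  simp [assembleBlocks]

theorem assembleBlocks_sum_X_mul (p : (ι → Fin q ⊕ Fin q) → MvPolynomial ι R) :
    assembleBlocks x y R q (fun w => (∑ i, X i) * p w) =
      (∑ i, X (x i) * X (y i)) * assembleBlocks x y R q p := by
  simp only [assembleBlocks_apply, map_mul, map_sum, bind₁_X_right, Finset.mul_sum, mul_left_comm]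

theorem assembleBlocks_mem_powIdeal (p : (ι → Fin q ⊕ Fin q) → MvPolynomial ι R)
    (hp : ∀ w, p w ∈ powIdeal R (blockSize ∘ w)) :
    assembleBlocks x y R q p ∈ powIdeal R fun _ : σ => q := by
  rw [assembleBlocks_apply]
  refine Ideal.sum_mem _ fun w _ => ?_
  set gen := ∏ i, blockGenerator (X (R := R) (x i)) (X (y i)) (w i)
  suffices le : powIdeal R (blockSize ∘ w) ≤
      ((powIdeal R fun _ : σ => q).colon {gen}).comap (bind₁ fun i => X (x i) * X (y i)) by
    have := le (hp w)
    rwa [Ideal.mem_comap, Submodule.mem_colon_singleton, smul_eq_mul, mul_comm] at this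
  rw [powIdeal, Ideal.span_le]
  rintro _ ⟨i, rfl⟩
  rw [SetLike.mem_coe, Ideal.mem_comap, Submodule.mem_colon_singleton, smul_eq_mul, mul_comm,
    map_pow, bind₁_X_right]
  have dvd_gen : blockGenerator (X (x i)) (X (y i)) (w i) * (X (x i) * X (y i)) ^ blockSize (w i) ∣
      gen * (X (x i) * X (y i)) ^ blockSize (w i) :=
    mul_dvd_mul_right (Finset.dvd_prod_of_mem _ (Finset.mem_univ i)) _
  rcases pow_dvd_blockGenerator_mul_pow (X (R := R) (x i)) (X (y i)) (w i) with h | h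
  · exact Ideal.mem_of_dvd _ (h.trans dvd_gen) (X_pow_mem_powIdeal le_rfl)
  · exact Ideal.mem_of_dvd _ (h.trans dvd_gen) (X_pow_mem_powIdeal le_rfl)

variable {x y}

theorem exists_assembleBlocks_eq_monomial (hxy : Function.Bijective (Sum.elim x y))
    {s : σ →₀ ℕ} (hs : ∀ t, s t < q) (a : R) :
    ∃ p, assembleBlocks x y R q p = monomial s a := by
  classical
  have := Fintype.ofBijective _ hxy
  choose w c hwc using fun i =>
    exists_eq_blockGenerator_mul_pow (X (R := R) (x i)) (X (y i)) (hs (x i)) (hs (y i))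
  refine ⟨Pi.single w (C a * ∏ i, X i ^ c i), ?_⟩
  have prod_pairs : (∏ t, X t ^ s t : MvPolynomial σ R) =
      ∏ i, X (x i) ^ s (x i) * X (y i) ^ s (y i) := by
    rw [← hxy.prod_comp, Fintype.prod_sum_type, Finset.prod_mul_distrib]
    rfl
  rw [assembleBlocks_apply, Fintype.sum_eq_single w fun v hv => by simp [hv], Pi.single_eq_same,
    monomial_eq, Finsupp.prod_fintype _ _ fun t => pow_zero _, prod_pairs,
    Finset.prod_congr rfl fun i _ => hwc i, Finset.prod_mul_distrib]
  simp only [map_mul, map_prod, map_pow, bind₁_X_right, bind₁_C_right]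
  ring

theorem powIdeal_sup_range_assembleBlocks (hxy : Function.Bijective (Sum.elim x y)) :
    (powIdeal R fun _ : σ => q).restrictScalars R ⊔ LinearMap.range (assembleBlocks x y R q) =
      ⊤ := by
  classical
  refine eq_top_iff.2 fun r _ => ?_
  induction r using MvPolynomial.induction_on' with
  | monomial s a =>
    by_cases hs : ∀ t, s t < q
    · exact Submodule.mem_sup_right (exists_assembleBlocks_eq_monomial hxy hs a)
    · refine Submodule.mem_sup_left (mem_powIdeal_iff.2 fun t ht => ?_)
      rw [coeff_monomial, if_neg]
      rintro rfl
      exact hs ht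
  | add r₁ r₂ h₁ h₂ => exact add_mem (h₁ trivial) (h₂ trivial)

variable {k : Type*} [Field k]

theorem finrank_quotient_powIdeal_const_eq_sum (hxy : Function.Bijective (Sum.elim x y)) :
    Module.finrank k (MvPolynomial σ k ⧸ powIdeal k fun _ : σ => q) =
      ∑ w : ι → Fin q ⊕ Fin q,
        Module.finrank k (MvPolynomial ι k ⧸ powIdeal k (blockSize ∘ w)) := by
  classical
  have := Fintype.ofBijective _ hxy
  simp only [finrank_quotient_powIdeal, Function.comp_apply]
  rw [Finset.prod_const, Finset.card_univ, ← Fintype.card_congr (Equiv.ofBijective _ hxy),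
    Fintype.card_sum, ← two_mul, pow_mul, ← Fintype.prod_sum fun _ : ι => blockSize, sum_blockSize,
    Finset.prod_const, Finset.card_univ]

theorem assembleBlocks_mem_powIdeal_iff (hxy : Function.Bijective (Sum.elim x y))
    (p : (ι → Fin q ⊕ Fin q) → MvPolynomial ι k) :
    assembleBlocks x y k q p ∈ (powIdeal k fun _ : σ => q) ↔
      ∀ w, p w ∈ powIdeal k (blockSize ∘ w) := by
  have : Finite σ := .of_surjective _ hxy.2
  exact mem_iff_forall_mem_of_finrank_eq_sum (I := (powIdeal k fun _ : σ => q).restrictScalars k)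
    (J := fun w => (powIdeal k (blockSize ∘ w)).restrictScalars k)
    (powIdeal_sup_range_assembleBlocks hxy) (assembleBlocks_mem_powIdeal x y)
    (finrank_quotient_powIdeal_const_eq_sum hxy) p

theorem assembleBlocks_mem_powIdeal_sup_iff (hxy : Function.Bijective (Sum.elim x y))
    (p : (ι → Fin q ⊕ Fin q) → MvPolynomial ι k) :
    assembleBlocks x y k q p ∈
        (powIdeal k fun _ : σ => q) ⊔ Ideal.span {∑ i, X (x i) * X (y i)} ↔
      ∀ w, p w ∈ powIdeal k (blockSize ∘ w) ⊔ Ideal.span {∑ i, X i} := by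
  simp only [Submodule.mem_sup, Ideal.mem_span_singleton', exists_exists_eq_and]
  constructor
  · rintro ⟨a, ha, b, hab⟩ w
    obtain ⟨c, hc, _, ⟨b', rfl⟩, hcb⟩ := Submodule.mem_sup.1
      (powIdeal_sup_range_assembleBlocks (R := k) (q := q) hxy ▸ Submodule.mem_top (x := b))
    have sub_mem : assembleBlocks x y k q (p - fun w => (∑ i, X i) * b' w) ∈
        powIdeal k fun _ : σ => q := by
      rw [map_sub, assembleBlocks_sum_X_mul, ← hab, ← hcb, add_mul, mul_comm c, ← add_assoc,
        mul_comm (assembleBlocks x y k q b'), add_sub_cancel_right]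
      exact add_mem ha (Ideal.mul_mem_left _ _ hc)
    refine ⟨_, (assembleBlocks_mem_powIdeal_iff hxy _).1 sub_mem w, b' w, ?_⟩
    simp only [Pi.sub_apply]
    ring
  · intro h
    choose a ha b hab using h
    refine ⟨_, (assembleBlocks_mem_powIdeal_iff hxy _).2 ha, assembleBlocks x y k q b, ?_⟩
    rw [mul_comm, ← assembleBlocks_sum_X_mul, ← map_add]
    congr 1
    funext w
    rw [← hab, Pi.add_apply, mul_comm]

theorem hilbertKunzLength_sum_X_mul_X_eq_sum_sumBlocks
    (hxy : Function.Bijective (Sum.elim x y)) (q : ℕ) :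
    hilbertKunzLength q (∑ i, X (x i) * X (y i) : MvPolynomial σ k) =
      ∑ w : ι → Fin q ⊕ Fin q, sumBlocks k (blockSize ∘ w) := by
  rw [hilbertKunzLength]
  set I := (powIdeal k fun _ : σ => q) ⊔ Ideal.span {∑ i, X (x i) * X (y i)}
  have sup_range : I.restrictScalars k ⊔ LinearMap.range (assembleBlocks x y k q) = ⊤ :=
    top_unique <| (powIdeal_sup_range_assembleBlocks hxy).ge.trans
      (sup_le_sup_right (Submodule.restrictScalars_mono k le_sup_left) _)
  rw [← (Submodule.Quotient.restrictScalarsEquiv k I).finrank_eq,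
    finrank_quotient_eq_sum
      (J := fun w => (powIdeal k (blockSize ∘ w) ⊔ Ideal.span {∑ i, X i}).restrictScalars k)
      sup_range (assembleBlocks_mem_powIdeal_sup_iff hxy)]
  exact Finset.sum_congr rfl fun w _ => (Submodule.Quotient.restrictScalarsEquiv k _).finrank_eq

end SumOfProducts

section Counting

variable {k ι : Type*} [Field k] [Fintype ι] [DecidableEq ι]

theorem sum_pi_prod_erase {W : Type*} [Fintype W] (f : W → ℕ) (i : ι) :
    ∑ w : ι → W, ∏ j ∈ Finset.univ.erase i, f (w j) =
      Fintype.card W * (∑ a, f a) ^ (Fintype.card ι - 1) := by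
  let g : ι → W → ℕ := Function.update (fun _ => f) i 1
  have g_of_mem : ∀ j ∈ Finset.univ.erase i, g j = f := fun j hj =>
    Function.update_of_ne (Finset.ne_of_mem_erase hj) ..
  have g_self : g i = 1 := Function.update_self ..
  calc ∑ w : ι → W, ∏ j ∈ Finset.univ.erase i, f (w j)
      = ∑ w : ι → W, ∏ j, g j (w j) := Finset.sum_congr rfl fun w _ => by
        rw [← Finset.mul_prod_erase _ _ (Finset.mem_univ i), g_self, Pi.one_apply, one_mul]
        exact Finset.prod_congr rfl fun j hj => by rw [g_of_mem j hj]
    _ = ∏ j, ∑ a, g j a := (Fintype.prod_sum g).symm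
    _ = Fintype.card W * (∑ a, f a) ^ (Fintype.card ι - 1) := by
        rw [← Finset.mul_prod_erase _ _ (Finset.mem_univ i), g_self,
          Finset.prod_congr rfl fun j hj => by rw [g_of_mem j hj], Finset.prod_const,
          Finset.card_erase_of_mem (Finset.mem_univ i), Finset.card_univ]
        simp

variable {p s Q : ℕ} [ExpChar k p]

theorem sum_sumBlocks_add_sum_sumTopBlocks [Nonempty ι] (hQ : Q = p ^ s) :
    ∑ w : ι → Fin Q ⊕ Fin Q, sumBlocks k (blockSize ∘ w) +
        ∑ w : ι → Fin Q ⊕ Fin Q, sumTopBlocks k Q (blockSize ∘ w) =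
      2 * Q * (Q ^ 2) ^ (Fintype.card ι - 1) := by
  obtain ⟨i⟩ := ‹Nonempty ι›
  let swapAt (w : ι → Fin Q ⊕ Fin Q) := Function.update w i (w i).swap
  have swapAt_involutive : Function.Involutive swapAt := fun w => by simp [swapAt]
  have blocks_add_top (w : ι → Fin Q ⊕ Fin Q) :
      sumBlocks k (blockSize ∘ w) + sumTopBlocks k Q (blockSize ∘ swapAt w) =
        ∏ j ∈ Finset.univ.erase i, blockSize (w j) := by
    rw [Function.comp_update, blockSize_swap]
    have size_le (j : ι) : (blockSize ∘ w) j ≤ p ^ s := hQ ▸ blockSize_le (w j)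
    have h := sumBlocks_add_sumTopBlocks_update_sub (k := k) size_le i
    rwa [← hQ] at h
  rw [← swapAt_involutive.bijective.sum_comp fun w => sumTopBlocks k Q (blockSize ∘ w),
    ← Finset.sum_add_distrib, Finset.sum_congr rfl fun w _ => blocks_add_top w,
    sum_pi_prod_erase, sum_blockSize, Fintype.card_sum, Fintype.card_fin, two_mul]

theorem sumShortBlocks_piecewise_sub (hQ : Q = p ^ s) {n : ι → ℕ} (hn : ∀ j, n j ≤ Q)
    (A : Finset ι) :
    sumShortBlocks k Q (A.piecewise (fun j => Q - n j) n) = sumShortBlocks k Q n := by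
  subst hQ
  induction A using Finset.induction_on with
  | empty => rw [Finset.piecewise_empty]
  | insert i A hi ih =>
    have piecewise_le : A.piecewise (fun j => p ^ s - n j) n ≤ fun _ => p ^ s :=
      A.piecewise_le_of_le_of_le (fun _ => Nat.sub_le ..) hn
    have piecewise_at_i : A.piecewise (fun j => p ^ s - n j) n i = n i :=
      Finset.piecewise_eq_of_notMem _ _ _ hi
    rw [Finset.piecewise_insert, ← piecewise_at_i, sumShortBlocks_update_sub piecewise_le, ih]

theorem sum_sumShortBlocks_double {q : ℕ} (hq : q + q = p ^ s) :
    ∑ w : ι → Fin (q + q) ⊕ Fin (q + q), sumShortBlocks k (q + q) (blockSize ∘ w) =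
      2 ^ Fintype.card ι * ∑ w : ι → Fin q ⊕ Fin q, sumShortBlocks k (q + q) (blockSize ∘ w) := by
  let double : (ι → Bool) × (ι → Fin q ⊕ Fin q) → (ι → Fin (q + q) ⊕ Fin (q + q)) :=
    fun w i => doubleBlock (w.1 i, w.2 i)
  have double_bijective : Function.Bijective double :=
    (Function.Bijective.piMap fun _ => doubleBlock_bijective q).comp
      (Equiv.arrowProdEquivProdArrow ..).symm.bijective
  have fold (b : ι → Bool) (w : ι → Fin q ⊕ Fin q) :
      sumShortBlocks k (q + q) (blockSize ∘ double (b, w)) =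
        sumShortBlocks k (q + q) (blockSize ∘ w) := by
    have size_le (j : ι) : (blockSize ∘ w) j ≤ q + q := (blockSize_le (w j)).trans (by omega)
    rw [← sumShortBlocks_piecewise_sub hq size_le {i | b i}]
    congr 1
    funext i
    simp [double, blockSize_doubleBlock, Finset.piecewise]
  rw [← double_bijective.sum_comp, Fintype.sum_prod_type]
  simp only [fold, Finset.sum_const, Finset.card_univ, Fintype.card_pi, Fintype.card_bool,
    Finset.prod_const, nsmul_eq_mul, Nat.cast_pow, Nat.cast_ofNat]

theorem two_mul_sum_sumBlocks_two_pow_succ [CharP k 2] [Nonempty ι] (s : ℕ) :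
    2 * ∑ w : ι → Fin (2 ^ (s + 1)) ⊕ Fin (2 ^ (s + 1)), sumBlocks k (blockSize ∘ w) =
      2 ^ Fintype.card ι * ∑ w : ι → Fin (2 ^ s) ⊕ Fin (2 ^ s), sumBlocks k (blockSize ∘ w) +
        2 * 2 ^ (s + 1) * ((2 ^ (s + 1)) ^ 2) ^ (Fintype.card ι - 1) := by
  have two_pow_succ : 2 ^ s + 2 ^ s = 2 ^ (s + 1) := by rw [pow_succ, mul_two]
  have short := sum_sumShortBlocks_double (k := k) (ι := ι) two_pow_succ
  have all := sum_sumBlocks_add_sum_sumTopBlocks (k := k) (ι := ι) two_pow_succ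
  have no_top (w : ι → Fin (2 ^ s) ⊕ Fin (2 ^ s)) :
      sumTopBlocks k (2 ^ (s + 1)) (blockSize ∘ w) = 0 :=
    sumTopBlocks_eq_zero (p := 2) (fun j => blockSize_le (w j)) (Nat.pow_lt_pow_succ one_lt_two)
  rw [two_pow_succ] at short all
  simp only [sumShortBlocks, no_top, Finset.sum_sub_distrib, Nat.cast_zero, sub_zero] at short
  zify at all ⊢
  linarith

end Counting

section CharTwo

variable {k ι σ : Type*} [Field k] [CharP k 2] [Fintype ι] {x y : ι → σ}

theorem hilbertKunzLength_two_pow_succ_sum_X_mul_X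
    (hxy : Function.Bijective (Sum.elim x y)) {r : ℕ} (hr : Fintype.card ι = r + 1) (e : ℕ) :
    hilbertKunzLength (2 ^ (e + 1)) (∑ i, X (x i) * X (y i) : MvPolynomial σ k) =
      2 ^ r * hilbertKunzLength (2 ^ e) (∑ i, X (x i) * X (y i) : MvPolynomial σ k) +
        2 ^ ((2 * r + 1) * (e + 1)) := by
  classical
  have : Nonempty ι := Fintype.card_pos_iff.1 (by omega)
  have powers : 2 * 2 ^ (e + 1) * ((2 ^ (e + 1)) ^ 2) ^ r = 2 * 2 ^ ((2 * r + 1) * (e + 1)) := by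
    rw [← pow_mul, ← pow_mul, mul_assoc, ← pow_add]
    congr 2
    ring
  have recursion := two_mul_sum_sumBlocks_two_pow_succ (k := k) (ι := ι) e
  rw [hr, Nat.add_sub_cancel, pow_succ' 2 r, powers] at recursion
  rw [hilbertKunzLength_sum_X_mul_X_eq_sum_sumBlocks hxy,
    hilbertKunzLength_sum_X_mul_X_eq_sum_sumBlocks hxy]
  linarith

theorem two_pow_sub_one_mul_hilbertKunzLength_sum_X_mul_X
    (hxy : Function.Bijective (Sum.elim x y)) {r : ℕ} (hr : Fintype.card ι = r + 1) (e : ℕ) :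
    (2 ^ (r + 1) - 1 : ℤ) * hilbertKunzLength (2 ^ e) (∑ i, X (x i) * X (y i) : MvPolynomial σ k) =
      2 ^ (r + 1) * 2 ^ ((2 * r + 1) * e) - 2 ^ (r * e) := by
  have : Finite σ := .of_surjective _ hxy.2
  induction e with
  | zero =>
    have constantCoeff_eq_zero : constantCoeff (∑ i, X (x i) * X (y i) : MvPolynomial σ k) = 0 := by
      simp
    rw [pow_zero, hilbertKunzLength_one constantCoeff_eq_zero]
    simp
  | succ e ih =>
    rw [hilbertKunzLength_two_pow_succ_sum_X_mul_X hxy hr]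
    push_cast
    linear_combination 2 ^ r * ih

end CharTwo

/-- Hilbert–Kunz function of the odd-dimensional `A₁` singularity in characteristic 2:
for `d = 2m − 1`,
`(2^m − 1) · HK_e(R_{2,d}) = 2^m · 2^{d·e} − 2^{(m−1)·e}`. -/
theorem HK_function_A1_char_two_odd (k : Type*) [Field k] [CharP k 2]
    (m : ℕ) (hm : 1 ≤ m) (e : ℕ) :
    ((2 : ℤ) ^ m - 1) *
        (HKfun k (2 * m) 2 e
          (∑ i : Fin m,
            (X (⟨2 * i, by omega⟩ : Fin (2 * m)) : MvPolynomial (Fin (2 * m)) k) *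
              X (⟨2 * i + 1, by omega⟩ : Fin (2 * m)))) =
      2 ^ m * 2 ^ ((2 * m - 1) * e) - 2 ^ ((m - 1) * e) := by
  obtain ⟨r, rfl⟩ := Nat.exists_eq_add_of_le' hm
  let x (i : Fin (r + 1)) : Fin (2 * (r + 1)) := ⟨2 * i, by omega⟩
  let y (i : Fin (r + 1)) : Fin (2 * (r + 1)) := ⟨2 * i + 1, by omega⟩
  have hxy : Function.Bijective (Sum.elim x y) := by
    refine (Fintype.bijective_iff_injective_and_card _).2 ⟨?_, by simp [two_mul]⟩
    rintro (i | i) (j | j) h <;> simp [x, y, Fin.ext_iff] at h ⊢ <;> omega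
  rw [HKfun_eq_hilbertKunzLength]
  exact two_pow_sub_one_mul_hilbertKunzLength_sum_X_mul_X hxy (Fintype.card_fin _) e
end

section
/- Let k be a field of characteristic 2, let m ≥ 1, set d = 2m, and let e ≥ 1. Then dim_k ( k[x_0,…,x_d] / (x_0^{2^e},…,x_d^{2^e}, x_0x_1 + x_2x_3 + ⋯ + x_{d−2}x_{d−1} + x_d²) ) = (2^m + 1) · 2^{m·(2e−1)}. In particular the Hilbert–Kunz function of the even-dimensional A_1 singularity in characteristic 2 is HK_e(R_{2,d}) = ((2^m+1)/2^m)·2^{de}. -/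
open MvPolynomial

/-! Write `q = 2 ^ e = 2Q` and `G = x₀x₁ + ⋯ + x_{d-2}x_{d-1}`. Modulo `x_d² + G` the element
`x_d ^ q` becomes `G ^ Q`, so the quotient is free of rank two over
`k[x₀, …, x_{d-1}] / (xᵢ ^ q, G ^ Q)`, and `G ^ Q = x₀^Q x₁^Q + ⋯` by Frobenius. On
`k[x₀, …, x_{d-1}] / (xᵢ ^ q)`, the `m`-fold tensor power of `k[x, y] / (x ^ q, y ^ q)`,
multiplication by `G ^ Q` is therefore the sum `T` over the tensor factors of multiplication by
`(xy) ^ Q`. Each summand squares to zero and they commute, so in characteristic two `T` is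
the differential of a tensor product of complexes. The homology of one factor is spanned by the
monomials with exactly one exponent `≥ Q`, so has dimension `q² - 2Q²`. By Künneth,
`2 dim (coker T) = dim + dim H(T) = q ^ (2m) + (q² - 2Q²) ^ m`. -/

section RankNullity

variable {K V W : Type*} [DivisionRing K] [AddCommGroup V] [Module K V] [FiniteDimensional K V]
  [AddCommGroup W] [Module K W]

theorem two_mul_finrank_quotient_range_eq (T : V →ₗ[K] V) (r : V →ₗ[K] W)
    (hrange : T.ker ⊓ r.ker = T.range) (hmap : T.ker.map r = ⊤) :
    2 * Module.finrank K (V ⧸ T.range) = Module.finrank K V + Module.finrank K W := by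
  have hquot := T.range.finrank_quotient_add_finrank
  have hT := T.finrank_range_add_finrank_ker
  have hr := (r.domRestrict T.ker).finrank_range_add_finrank_ker
  rw [LinearMap.range_domRestrict, hmap, finrank_top, LinearMap.ker_domRestrict,
    ← Submodule.finrank_map_subtype_eq, Submodule.map_comap_subtype, hrange] at hr
  omega

end RankNullity

section CoordShift

variable {E ι : Type*} [DecidableEq ι] {s : E → E} {P P' : E → Prop}
  [DecidablePred P] [DecidablePred P']

/-- The `R`-linear operator `1 ⊗ ⋯ ⊗ u ⊗ ⋯ ⊗ 1` (with `u` in position `i`) on the tensor power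
`(E → R)^{⊗ι}`, modelled as functions on `ι → E`. Here `u` moves the value at `s x` to `x` when
`P x` holds and is zero at all other points. -/
def coordShift (R : Type*) [Semiring R] (s : E → E) (P : E → Prop) [DecidablePred P] (i : ι) :
    ((ι → E) → R) →ₗ[R] ((ι → E) → R) where
  toFun f a := if P (a i) then f (Function.update a i (s (a i))) else 0
  map_add' f g := by ext a; by_cases h : P (a i) <;> simp [h]
  map_smul' c f := by ext a; simp

/-- The operator `∑ᵢ 1 ⊗ ⋯ ⊗ u ⊗ ⋯ ⊗ 1` that the operator `u` of `coordShift` induces on the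
whole tensor power: the differential of a tensor product of complexes in characteristic `2`. -/
def shiftSum (R ι : Type*) [CommSemiring R] [Fintype ι] [DecidableEq ι] (s : E → E) (P : E → Prop)
    [DecidablePred P] : ((ι → E) → R) →ₗ[R] ((ι → E) → R) :=
  ∑ i, coordShift R s P i

section Semiring

variable {R : Type*} [Semiring R]

theorem coordShift_apply (i : ι) (f : (ι → E) → R) (a : ι → E) :
    coordShift R s P i f a = if P (a i) then f (Function.update a i (s (a i))) else 0 :=
  rfl

theorem coordShift_comm {i j : ι} (hij : i ≠ j) (f : (ι → E) → R) :
    coordShift R s P i (coordShift R s P' j f) = coordShift R s P' j (coordShift R s P i f) := by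
  ext a
  simp only [coordShift_apply, Function.update_of_ne hij, Function.update_of_ne hij.symm,
    Function.update_comm hij, ← ite_and, and_comm]

theorem coordShift_coordShift_apply (hs : Function.Involutive s) (i : ι) (f : (ι → E) → R)
    (a : ι → E) :
    coordShift R s P i (coordShift R s P' i f) a = if P (a i) ∧ P' (s (a i)) then f a else 0 := by
  simp [coordShift_apply, hs (a i), ite_and]

theorem coordShift_coordShift_eq_zero (hs : Function.Involutive s) (hP : ∀ x, P x → ¬P (s x))
    (i : ι) (f : (ι → E) → R) : coordShift R s P i (coordShift R s P i f) = 0 := by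
  ext a
  rw [coordShift_coordShift_apply hs, if_neg fun h => hP _ h.1 h.2, Pi.zero_apply]

end Semiring

variable [Fintype ι]

theorem shiftSum_apply {R : Type*} [CommSemiring R] (f : (ι → E) → R) :
    shiftSum R ι s P f = ∑ i, coordShift R s P i f := by
  simp [shiftSum]

section CharTwo

variable {R : Type*} [CommRing R] [CharP R 2]

theorem shiftSum_shiftSum (hs : Function.Involutive s) (hP : ∀ x, P x → ¬P (s x))
    (f : (ι → E) → R) : shiftSum R ι s P (shiftSum R ι s P f) = 0 := by
  simp only [shiftSum_apply, map_sum]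
  rw [← Finset.sum_product']
  refine Finset.sum_involution (fun x _ => x.swap) (fun x _ => ?_) (fun x _ hx hswap => hx ?_)
    (fun x _ => Finset.mem_univ _) (fun x _ => x.swap_swap)
  · obtain heq | hne := eq_or_ne x.1 x.2
    · simp [heq, coordShift_coordShift_eq_zero hs hP]
    · rw [Prod.fst_swap, Prod.snd_swap, coordShift_comm hne]
      exact funext fun a => CharTwo.add_self_eq_zero _
  · rw [show x.2 = x.1 from congrArg Prod.fst hswap, coordShift_coordShift_eq_zero hs hP]

-- The reverse shift in position `i` is a homotopy: its commutators with the other summands of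
-- `shiftSum` vanish in characteristic two.
theorem shiftSum_coordShift_add_coordShift_shiftSum (hs : Function.Involutive s) (i : ι)
    (f : (ι → E) → R) (a : ι → E) :
    shiftSum R ι s P (coordShift R s (P ∘ s) i f) a +
        coordShift R s (P ∘ s) i (shiftSum R ι s P f) a =
      (if P (a i) then f a else 0) + if P (s (a i)) then f a else 0 := by
  simp only [shiftSum_apply, map_sum, Finset.sum_apply, ← Finset.sum_add_distrib]
  rw [Finset.sum_eq_single i]
  · simp [coordShift_coordShift_apply hs, hs (a i)]
  · intro j _ hji
    rw [coordShift_comm hji, CharTwo.add_self_eq_zero]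
  · simp

theorem mem_range_shiftSum (hs : Function.Involutive s) (hP : ∀ x, P x → ¬P (s x))
    (J : Finset ι) {f : (ι → E) → R} (hf : shiftSum R ι s P f = 0)
    (hfJ : ∀ a : ι → E, (∀ i ∈ J, ¬P (a i) ∧ ¬P (s (a i))) → f a = 0) :
    f ∈ (shiftSum R ι s P).range := by
  induction J using Finset.induction_on generalizing f with
  | empty =>
    rw [show f = 0 from funext fun a => hfJ a (by simp)]
    exact zero_mem _
  | insert i J _ ih =>
    -- Subtracting the boundary `g` kills `f` wherever coordinate `i` is moved.
    set g := shiftSum R ι s P (coordShift R s (P ∘ s) i f)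
    have hg (a : ι → E) :
        g a = (if P (a i) then f a else 0) + if P (s (a i)) then f a else 0 := by
      rw [← shiftSum_coordShift_add_coordShift_shiftSum hs, hf, map_zero, Pi.zero_apply, add_zero]
    have hg_mem : g ∈ (shiftSum R ι s P).range := LinearMap.mem_range_self _ _
    have hfg_mem : f - g ∈ (shiftSum R ι s P).range := by
      refine ih ?_ fun a ha => ?_
      · rw [map_sub, hf, shiftSum_shiftSum hs hP, sub_zero]
      rw [Pi.sub_apply, hg]
      by_cases hup : P (a i)
      · simp [hup, hP _ hup]
      by_cases hlow : P (s (a i))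
      · simp [hup, hlow]
      simp [hup, hlow, hfJ a (by simpa [hup, hlow] using ha)]
    simpa only [sub_add_cancel] using add_mem hfg_mem hg_mem

end CharTwo

theorem card_not_and_not_apply [Fintype E] (hs : Function.Involutive s)
    (hP : ∀ x, P x → ¬P (s x)) :
    Fintype.card {x // ¬P x ∧ ¬P (s x)} = Fintype.card E - 2 * Fintype.card {x // P x} := by
  have hswap : Fintype.card {x // (P ∘ s) x} = Fintype.card {x // P x} :=
    Fintype.card_congr (hs.toPerm.subtypeEquiv fun _ => Iff.rfl)
  have hdisj : Disjoint P (P ∘ s) := Pi.disjoint_iff.2 fun x => by simpa using hP x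
  have hunion := Fintype.card_subtype_or_disjoint P (P ∘ s) hdisj
  simp only [← not_or]
  rw [Fintype.card_subtype_compl, two_mul]
  simp_all

variable {k : Type*} [Field k] [CharP k 2]

-- The homology of `shiftSum` is represented by the functions supported on the points none of whose
-- coordinates is moved, which is the Künneth formula for a tensor power.
theorem two_mul_finrank_quotient_range_shiftSum [Fintype E] (hs : Function.Involutive s)
    (hP : ∀ x, P x → ¬P (s x)) :
    2 * Module.finrank k (((ι → E) → k) ⧸ (shiftSum k ι s P).range) =
      Fintype.card E ^ Fintype.card ι +
        (Fintype.card E - 2 * Fintype.card {x // P x}) ^ Fintype.card ι := by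
  let incl : (ι → {x // ¬P x ∧ ¬P (s x)}) → ι → E := fun a i => a i
  have hincl : Function.Injective incl := Subtype.val_injective.comp_left
  rw [two_mul_finrank_quotient_range_eq _ (LinearMap.funLeft k k incl)]
  · simp [card_not_and_not_apply hs hP]
  · ext f
    simp only [Submodule.mem_inf, LinearMap.mem_ker]
    constructor
    · rintro ⟨hf, hfincl⟩
      exact mem_range_shiftSum hs hP Finset.univ hf fun a ha =>
        congrFun hfincl fun i => ⟨a i, ha i (Finset.mem_univ i)⟩
    · rintro ⟨f, rfl⟩
      refine ⟨shiftSum_shiftSum hs hP f, funext fun a => ?_⟩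
      simp [LinearMap.funLeft_apply, shiftSum_apply, coordShift_apply, incl, (a _).2.1]
  · refine eq_top_iff.2 fun w _ => ⟨Function.extend incl w 0, ?_, ?_⟩
    · rw [SetLike.mem_coe, LinearMap.mem_ker, shiftSum_apply]
      refine Finset.sum_eq_zero fun i _ => funext fun a => ?_
      rw [coordShift_apply]
      split_ifs with hup
      · refine Function.extend_apply' _ _ _ ?_
        rintro ⟨b, hb⟩
        refine (b i).2.2 ?_
        rwa [show (b i : E) = s (a i) by simpa [incl] using congrFun hb i, hs]
      · rfl
    · exact funext fun a => hincl.extend_apply w 0 a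

end CoordShift

section BoxCoeff

variable {R ι κ : Type*} [CommSemiring R] {q Q : ℕ}

theorem mem_span_range_X_pow_iff {σ : Type*} {p : MvPolynomial σ R} :
    p ∈ Ideal.span (Set.range fun x => X (R := R) x ^ q) ↔
      ∀ a : σ →₀ ℕ, (∀ x, a x < q) → coeff a p = 0 := by
  have hX : (fun x => X (R := R) x ^ q) = (fun a => monomial a 1) ∘ fun x : σ => .single x q :=
    funext fun x => X_pow_eq_monomial
  rw [hX, Set.range_comp, mem_ideal_span_monomial_image]
  refine forall_congr' fun a => ?_
  rw [mem_support_iff, not_imp_comm]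
  simp

/-- The exponent of the monomial `∏ X (i, j) ^ Q` over all `j`. -/
noncomputable def rowExponent (κ : Type*) [Fintype κ] (Q : ℕ) (i : ι) : ι × κ →₀ ℕ :=
  ∑ j, Finsupp.single (i, j) Q

theorem rowExponent_apply [Fintype κ] [DecidableEq ι] (i : ι) (x : ι × κ) :
    rowExponent κ Q i x = if x.1 = i then Q else 0 := by
  classical
  obtain ⟨i', j⟩ := x
  obtain rfl | hne := eq_or_ne i' i <;>
    simp_all [rowExponent, Finsupp.finsetSum_apply, Finsupp.single_apply, eq_comm]

variable [Fintype ι] [Fintype κ]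

/-- A matrix with entries below `q`, as an exponent vector in the variables indexed by `ι × κ`.
These are the exponents of the monomials that survive modulo the `q`-th powers of the variables;
they are curried so that they match the index set `ι → E` of `coordShift`. -/
noncomputable def boxExponent (a : ι → κ → Fin q) : ι × κ →₀ ℕ :=
  Finsupp.equivFunOnFinite.symm fun x => a x.1 x.2

theorem boxExponent_apply (a : ι → κ → Fin q) (x : ι × κ) : boxExponent a x = a x.1 x.2 :=
  rfl

theorem boxExponent_injective :
    Function.Injective (boxExponent : (ι → κ → Fin q) → ι × κ →₀ ℕ) := fun _ _ h =>
  funext₂ fun i j => Fin.ext (DFunLike.congr_fun h (i, j))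

theorem exists_boxExponent_eq {b : ι × κ →₀ ℕ} (hb : ∀ x, b x < q) :
    ∃ a : ι → κ → Fin q, boxExponent a = b :=
  ⟨fun i j => ⟨b (i, j), hb _⟩, Finsupp.ext fun _ => rfl⟩

theorem rowExponent_le_boxExponent_iff {i : ι} {a : ι → κ → Fin q} :
    rowExponent κ Q i ≤ boxExponent a ↔ ∀ j, Q ≤ (a i j : ℕ) := by
  classical
  simp only [Finsupp.le_def, rowExponent_apply, boxExponent_apply, Prod.forall]
  constructor
  · exact fun h j => by simpa using h i j
  · intro h i' j
    split_ifs with hi'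
    · exact hi' ▸ h j
    · exact Nat.zero_le _

theorem boxExponent_sub_rowExponent [DecidableEq ι] {i : ι} {a : ι → κ → Fin (Q + Q)}
    (ha : ∀ j, Q ≤ (a i j : ℕ)) :
    boxExponent a - rowExponent κ Q i = boxExponent (Function.update a i (finAddFlip ∘ a i)) := by
  ext ⟨i', j⟩
  rw [Finsupp.tsub_apply, rowExponent_apply, boxExponent_apply, boxExponent_apply]
  obtain rfl | hne := eq_or_ne i' i
  · have hflip : finAddFlip (a i' j) = ⟨a i' j - Q, _⟩ :=
      finAddFlip_apply_mk_right (ha j) (a i' j).isLt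
    simp [hflip]
  · simp [hne]

/-- The coefficients of a polynomial at the monomials of degree less than `q` in each variable,
which are coordinates on the quotient by the `q`-th powers of the variables. -/
noncomputable def boxCoeff (R ι κ : Type*) [CommSemiring R] [Fintype ι] [Fintype κ] (q : ℕ) :
    MvPolynomial (ι × κ) R →ₗ[R] ((ι → κ → Fin q) → R) :=
  LinearMap.pi fun a => lcoeff R (boxExponent a)

theorem boxCoeff_apply (p : MvPolynomial (ι × κ) R) (a : ι → κ → Fin q) :
    boxCoeff R ι κ q p a = coeff (boxExponent a) p :=
  rfl

theorem boxCoeff_surjective : Function.Surjective (boxCoeff R ι κ q) := by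
  classical
  intro f
  refine ⟨∑ a, monomial (boxExponent a) (f a), funext fun a => ?_⟩
  simp [boxCoeff_apply, coeff_sum, coeff_monomial, boxExponent_injective.eq_iff]

theorem boxCoeff_eq_zero_iff {p : MvPolynomial (ι × κ) R} :
    boxCoeff R ι κ q p = 0 ↔ p ∈ Ideal.span (Set.range fun x => X (R := R) x ^ q) := by
  rw [mem_span_range_X_pow_iff, funext_iff]
  constructor
  · intro h b hb
    obtain ⟨a, rfl⟩ := exists_boxExponent_eq hb
    exact h a
  · exact fun h a => h _ fun x => (a x.1 x.2).isLt

theorem boxCoeff_prod_X_pow_mul [DecidableEq ι] (i : ι) (p : MvPolynomial (ι × κ) R) :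
    boxCoeff R ι κ (Q + Q) ((∏ j, X (i, j) ^ Q) * p) =
      coordShift R (finAddFlip ∘ ·) (fun b => ∀ j, Q ≤ (b j : ℕ)) i
        (boxCoeff R ι κ (Q + Q) p) := by
  have hmonomial : ∏ j : κ, X (R := R) (i, j) ^ Q = monomial (rowExponent κ Q i) 1 := by
    simp_rw [X_pow_eq_monomial, rowExponent, monomial_sum_one]
  ext a
  simp only [hmonomial, boxCoeff_apply, coeff_monomial_mul', one_mul, coordShift_apply,
    rowExponent_le_boxExponent_iff]
  exact if_ctx_congr Iff.rfl (fun ha => by rw [boxExponent_sub_rowExponent ha]) fun _ => rfl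

theorem boxCoeff_sum_prod_X_pow_mul [DecidableEq ι] (p : MvPolynomial (ι × κ) R) :
    boxCoeff R ι κ (Q + Q) ((∑ i, ∏ j, X (i, j) ^ Q) * p) =
      shiftSum R ι (finAddFlip ∘ ·) (fun b => ∀ j, Q ≤ (b j : ℕ)) (boxCoeff R ι κ (Q + Q) p) := by
  simp [shiftSum_apply, Finset.sum_mul, boxCoeff_prod_X_pow_mul]

end BoxCoeff

section SumProdPow

theorem finrank_quotient_sup_span_singleton {R S V : Type*} [CommRing R] [CommRing S]
    [Algebra R S] [AddCommGroup V] [Module R V] {I : Ideal S} {t : S} {φ : S →ₗ[R] V}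
    {T : V →ₗ[R] V} (hφ : Function.Surjective φ) (hI : ∀ p, φ p = 0 ↔ p ∈ I)
    (hT : ∀ p, φ (t * p) = T (φ p)) :
    Module.finrank R (S ⧸ (I ⊔ Ideal.span {t})) = Module.finrank R (V ⧸ T.range) := by
  have hker : (T.range.mkQ ∘ₗ φ).ker = (I ⊔ Ideal.span {t}).restrictScalars R := by
    ext p
    rw [LinearMap.ker_comp, Submodule.ker_mkQ, Submodule.mem_comap, Submodule.restrictScalars_mem,
      Submodule.mem_sup]
    constructor
    · rintro ⟨v, hv⟩
      obtain ⟨r, rfl⟩ := hφ v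
      refine ⟨p - t * r, ?_, t * r, Ideal.mem_span_singleton.2 (dvd_mul_right t r), by ring⟩
      rw [← hI, map_sub, hT, hv, sub_self]
    · rintro ⟨x, hx, y, hy, rfl⟩
      obtain ⟨r, rfl⟩ := Ideal.mem_span_singleton.1 hy
      rw [map_add, (hI x).2 hx, zero_add, hT]
      exact LinearMap.mem_range_self T _
  have e := (Submodule.quotEquivOfEq _ _ hker).symm.trans
    ((T.range.mkQ ∘ₗ φ).quotKerEquivOfSurjective (T.range.mkQ_surjective.comp hφ))
  exact e.finrank_eq

theorem le_finAddFlip_iff {m n : ℕ} (a : Fin (m + n)) :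
    n ≤ (finAddFlip a : ℕ) ↔ (a : ℕ) < m := by
  induction a using Fin.addCases with
  | left a => simp [finAddFlip_apply_castAdd]
  | right a => simp [finAddFlip_apply_natAdd]

theorem card_pi_fin_add_le (κ : Type*) [Fintype κ] [DecidableEq κ] (m n : ℕ) :
    Fintype.card {b : κ → Fin (m + n) // ∀ j, m ≤ (b j : ℕ)} = n ^ Fintype.card κ := by
  have hcoord : Fintype.card {a : Fin (m + n) // m ≤ (a : ℕ)} = n := by
    simp_rw [← not_lt]
    rw [Fintype.card_subtype_compl, Fintype.card_subtype, Fin.card_filter_val_lt, Fintype.card_fin]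
    omega
  let e : {b : κ → Fin (m + n) // ∀ j, m ≤ (b j : ℕ)} ≃ (κ → {a : Fin (m + n) // m ≤ (a : ℕ)}) :=
    Equiv.subtypePiEquivPi (p := fun (_ : κ) (a : Fin (m + n)) => m ≤ (a : ℕ))
  rw [Fintype.card_congr e, Fintype.card_fun, hcoord]

theorem two_mul_finrank_quotient_sum_prod_X_pow {k : Type*} [Field k] [CharP k 2] (ι κ : Type*)
    [Fintype ι] [Fintype κ] [Nonempty κ] (Q : ℕ) :
    2 * Module.finrank k (MvPolynomial (ι × κ) k ⧸
        (Ideal.span (Set.range fun x => X (R := k) x ^ (2 * Q)) ⊔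
          Ideal.span {∑ i : ι, ∏ j : κ, X (R := k) (i, j) ^ Q})) =
      ((2 * Q) ^ Fintype.card κ) ^ Fintype.card ι +
        ((2 * Q) ^ Fintype.card κ - 2 * Q ^ Fintype.card κ) ^ Fintype.card ι := by
  classical
  have hflip : Function.Involutive fun b : κ → Fin (Q + Q) => finAddFlip ∘ b := fun b =>
    funext fun j => by simp [finAddFlip]
  have hupper (b : κ → Fin (Q + Q)) (hb : ∀ j, Q ≤ (b j : ℕ)) :
      ¬∀ j, Q ≤ ((finAddFlip ∘ b) j : ℕ) := fun h =>
    let j := Classical.arbitrary κ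
    (hb j).not_gt ((le_finAddFlip_iff (b j)).1 (h j))
  rw [two_mul Q, finrank_quotient_sup_span_singleton boxCoeff_surjective
    (fun _ => boxCoeff_eq_zero_iff) boxCoeff_sum_prod_X_pow_mul,
    two_mul_finrank_quotient_range_shiftSum hflip hupper, card_pi_fin_add_le, Fintype.card_fun,
    Fintype.card_fin]

end SumProdPow

section AdjoinVariable

variable {k S : Type*} [Field k] [CommRing S] [Algebra k S]

open scoped Polynomial

theorem finrank_quotient_map_C_sup_span_of_monic (I : Ideal S) {h : S[X]} (hh : h.Monic) :
    Module.finrank k (S[X] ⧸ (I.map Polynomial.C ⊔ Ideal.span {h})) =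
      h.natDegree * Module.finrank k (S ⧸ I) := by
  let e : (S[X] ⧸ (I.map Polynomial.C ⊔ Ideal.span {h})) ≃ₐ[k]
      AdjoinRoot (h.map (Ideal.Quotient.mk I)) :=
    (Ideal.quotientEquivAlgOfEq k (sup_comm _ _)).trans <|
      (DoubleQuot.quotQuotEquivQuotSupₐ k (Ideal.span {h}) (I.map Polynomial.C)).symm.trans <|
      (Ideal.quotientEquivAlgOfEq k (Ideal.map_map _ _)).trans <|
      (AdjoinRoot.quotEquivQuotMap h I).restrictScalars k
  rw [e.toLinearEquiv.finrank_eq]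
  cases subsingleton_or_nontrivial (S ⧸ I) with
  | inl _ =>
    have : Subsingleton (AdjoinRoot (h.map (Ideal.Quotient.mk I))) :=
      Module.subsingleton (S ⧸ I) _
    simp only [Module.finrank_zero_of_subsingleton, mul_zero]
  | inr _ =>
    have hmonic := hh.map (Ideal.Quotient.mk I)
    have := hmonic.free_adjoinRoot
    rw [← Module.finrank_mul_finrank k (S ⧸ I), (AdjoinRoot.powerBasis' hmonic).finrank,
      AdjoinRoot.powerBasis'_dim, hh.natDegree_map, mul_comm]

theorem map_C_sup_span_X_pow_mul_sup_span_X_pow_sub_C (I : Ideal S) (g : S) (n Q : ℕ) :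
    I.map Polynomial.C ⊔ Ideal.span {Polynomial.X ^ (n * Q)} ⊔
        Ideal.span {Polynomial.X ^ n - Polynomial.C g} =
      (I ⊔ Ideal.span {g ^ Q}).map Polynomial.C ⊔
        Ideal.span {Polynomial.X ^ n - Polynomial.C g} := by
  obtain ⟨r, hr⟩ : (Polynomial.X ^ n - Polynomial.C g : S[X]) ∣
      Polynomial.X ^ (n * Q) - Polynomial.C (g ^ Q) := by
    simpa only [pow_mul, map_pow] using sub_dvd_pow_sub_pow _ (Polynomial.C g) Q
  rw [Ideal.map_sup, Ideal.map_span, Set.image_singleton, sup_assoc, sup_assoc,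
    ← Ideal.span_insert, ← Ideal.span_insert, sub_eq_iff_eq_add'.1 hr, mul_comm,
    Ideal.span_pair_add_mul_right]

theorem optionEquivLeft_rename_some {R σ : Type*} [CommSemiring R] (p : MvPolynomial σ R) :
    optionEquivLeft R σ (rename some p) = Polynomial.C p := by
  induction p using MvPolynomial.induction_on with
  | C r => simp
  | add p p' hp hp' => simp [hp, hp']
  | mul_X p x hp => simp [hp]

theorem map_optionEquivLeft_span {R σ : Type*} [CommRing R] (g : MvPolynomial σ R) (n q : ℕ) :
    (Ideal.span (Set.range (fun x => X (R := R) x ^ q) ∪ {X none ^ n - rename some g})).map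
        (optionEquivLeft R σ : MvPolynomial (Option σ) R →+* (MvPolynomial σ R)[X]) =
      (Ideal.span (Set.range fun x => X (R := R) x ^ q)).map Polynomial.C ⊔
        Ideal.span {Polynomial.X ^ q} ⊔ Ideal.span {Polynomial.X ^ n - Polynomial.C g} := by
  rw [Ideal.map_span, Set.image_union, Set.image_singleton, Option.range_eq, Set.image_insert_eq,
    ← Set.range_comp, Ideal.span_union, Ideal.span_insert, Ideal.map_span, ← Set.range_comp,
    sup_comm (Ideal.span {_})]
  simp [Function.comp_def, optionEquivLeft_X_none, optionEquivLeft_X_some,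
    optionEquivLeft_rename_some]

theorem finrank_quotient_X_none_pow_sub {σ : Type*} (g : MvPolynomial σ k) {n : ℕ} (hn : n ≠ 0)
    (Q : ℕ) :
    Module.finrank k (MvPolynomial (Option σ) k ⧸
        Ideal.span (Set.range (fun x => X (R := k) x ^ (n * Q)) ∪ {X none ^ n - rename some g})) =
      n * Module.finrank k (MvPolynomial σ k ⧸
        (Ideal.span (Set.range fun x => X (R := k) x ^ (n * Q)) ⊔ Ideal.span {g ^ Q})) := by
  rw [(Ideal.quotientEquivAlg _ _ (optionEquivLeft k σ)
      (map_optionEquivLeft_span g n (n * Q)).symm).toLinearEquiv.finrank_eq,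
    map_C_sup_span_X_pow_mul_sup_span_X_pow_sub_C,
    finrank_quotient_map_C_sup_span_of_monic _ (Polynomial.monic_X_pow_sub_C g hn),
    Polynomial.natDegree_X_pow_sub_C]

end AdjoinVariable

section HilbertKunz

variable {k : Type*} [Field k]

theorem finrank_quotient_sum_prod_add_sq [CharP k 2] (ι κ : Type*) [Fintype ι] [Fintype κ]
    [Nonempty κ] (e : ℕ) :
    Module.finrank k (MvPolynomial (Option (ι × κ)) k ⧸
        Ideal.span (Set.range (fun x => X (R := k) x ^ 2 ^ (e + 1)) ∪
          {∑ i : ι, ∏ j : κ, X (some (i, j)) + X none ^ 2})) =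
      ((2 ^ (e + 1)) ^ Fintype.card κ) ^ Fintype.card ι +
        ((2 ^ (e + 1)) ^ Fintype.card κ - 2 * (2 ^ e) ^ Fintype.card κ) ^ Fintype.card ι := by
  have hfrob : (∑ i : ι, ∏ j : κ, X (R := k) (i, j)) ^ 2 ^ e = ∑ i, ∏ j, X (i, j) ^ 2 ^ e := by
    simp_rw [sum_pow_char_pow 2, Finset.prod_pow]
  have hsub : ∑ i : ι, ∏ j : κ, X (R := k) (some (i, j)) + X none ^ 2 =
      X none ^ 2 - rename some (∑ i : ι, ∏ j : κ, X (i, j)) := by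
    simp [CharTwo.sub_eq_add, add_comm]
  rw [hsub, pow_succ', finrank_quotient_X_none_pow_sub _ two_ne_zero, hfrob,
    two_mul_finrank_quotient_sum_prod_X_pow]

theorem HKfun_rename_equiv {σ : Type*} {n : ℕ} (v : σ ≃ Fin n) (p e : ℕ) (f : MvPolynomial σ k) :
    HKfun k n p e (rename v f) =
      Module.finrank k (MvPolynomial σ k ⧸
        Ideal.span (Set.range (fun x => X (R := k) x ^ p ^ e) ∪ {f})) := by
  have hmap : Ideal.span (Set.range (fun i => X (R := k) i ^ p ^ e) ∪ {rename v f}) =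
      (Ideal.span (Set.range (fun x => X (R := k) x ^ p ^ e) ∪ {f})).map
        (renameEquiv k v : MvPolynomial σ k →+* MvPolynomial (Fin n) k) := by
    rw [Ideal.map_span, Set.image_union, Set.image_singleton, ← Set.range_comp,
      ← v.surjective.range_comp]
    simp [Function.comp_def]
  exact (Ideal.quotientEquivAlg _ _ (renameEquiv k v) hmap).toLinearEquiv.finrank_eq.symm

/-- The pairing of the variables of `x_0x_1 + ⋯ + x_{2m-2}x_{2m-1} + x_{2m}²`: `some (i, j)` stands
for `x_{2i+j}` and `none` for `x_{2m}`. -/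
def pairedVariables (m : ℕ) : Option (Fin m × Fin 2) ≃ Fin (2 * m + 1) :=
  (finProdFinEquiv.trans (finCongr (mul_comm m 2))).optionCongr.trans finSuccEquivLast.symm

theorem pairedVariables_some {m : ℕ} (i : Fin m) (j : Fin 2) :
    pairedVariables m (some (i, j)) = ⟨2 * i + j, by omega⟩ := by
  ext
  simp [pairedVariables, add_comm]

theorem pairedVariables_none (m : ℕ) : pairedVariables m none = ⟨2 * m, by omega⟩ :=
  rfl

end HilbertKunz

/-- Hilbert–Kunz function of the even-dimensional `A₁` singularity in characteristic 2:
for `d = 2m`, `HK_e(R_{2,d}) = (2^m + 1) · 2^{m(2e−1)}`. -/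
theorem HK_function_A1_char_two_even (k : Type*) [Field k] [CharP k 2]
    (m : ℕ) (hm : 1 ≤ m) (e : ℕ) (he : 1 ≤ e) :
    HKfun k (2 * m + 1) 2 e
        ((∑ i : Fin m,
            (X (⟨2 * i, by omega⟩ : Fin (2 * m + 1)) : MvPolynomial (Fin (2 * m + 1)) k) *
              X (⟨2 * i + 1, by omega⟩ : Fin (2 * m + 1))) +
          X (⟨2 * m, by omega⟩ : Fin (2 * m + 1)) ^ 2) =
      (2 ^ m + 1) * 2 ^ (m * (2 * e - 1)) := by
  obtain ⟨e, rfl⟩ := Nat.exists_eq_add_of_le' he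
  have hf : (∑ i : Fin m, X ⟨2 * i, by omega⟩ * X ⟨2 * i + 1, by omega⟩) +
        X ⟨2 * m, by omega⟩ ^ 2 =
      rename (R := k) (pairedVariables m) (∑ i, ∏ j, X (some (i, j)) + X none ^ 2) := by
    simp [Fin.prod_univ_two, pairedVariables_some, pairedVariables_none]
  have hbox : ((2 : ℕ) ^ (e + 1)) ^ 2 = 2 ^ (2 * e + 1) + 2 ^ (2 * e + 1) := by ring
  have hmoved : 2 * (2 ^ e) ^ 2 = 2 ^ (2 * e + 1) := by ring
  have hexp : 2 * (e + 1) - 1 = 2 * e + 1 := by omega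
  rw [hf, HKfun_rename_equiv, finrank_quotient_sum_prod_add_sq, Fintype.card_fin, Fintype.card_fin,
    hbox, hmoved, Nat.add_sub_cancel, hexp, ← two_mul, mul_pow, pow_mul' 2 m, add_mul, one_mul]
end

section
/- Let k be a field of characteristic 2 and d ≥ 1. The real sequence e ↦ dim_k( k[x_0,…,x_d]/(x_0^{2^e},…,x_d^{2^e}, Q_d) ) / 2^{d·e} converges as e → ∞; its limit (the Hilbert–Kunz multiplicity of the A_1 singularity in characteristic 2) equals 2^m/(2^m − 1) when d = 2m − 1 is odd, and equals (2^m + 1)/2^m when d = 2m is even. -/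
open MvPolynomial

/-- The defining equation `Q_d` of the `A₁` singularity in characteristic 2:
`Q_d = x_0x_1 + x_2x_3 + ⋯ + x_{d−1}x_d` for `d` odd and
`Q_d = x_0x_1 + ⋯ + x_{d−2}x_{d−1} + x_d²` for `d` even. -/
noncomputable def A1poly (k : Type*) [Field k] (d : ℕ) : MvPolynomial (Fin (d + 1)) k :=
  (∑ i : Fin ((d + 1) / 2),
      X (⟨2 * i, by omega⟩ : Fin (d + 1)) * X (⟨2 * i + 1, by omega⟩ : Fin (d + 1))) +
    if Even d then X (⟨d, by omega⟩ : Fin (d + 1)) ^ 2 else 0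

/-!
Let `I = (x_s ^ b_s, f)`, where `f` is a sum of monomials in disjoint sets of variables. The inverse
system of `I` splits along the chains of exponents that differ by exponents of these monomials, and
every piece is dual to a quotient of `k[x_i]` by powers `x_i ^ a_i` and the linear form `∑ x_i`.

In characteristic 2 the dimension of the latter quotient is the number of Nim positions `s` with
`s_i < a_i` and nim-sum zero. Both numbers are `∏_{i ≠ j} a_i` as soon as a power `2 ^ e` lies
between `a_j` and all other `a_i`: Frobenius puts `x_j ^ 2 ^ e` into the ideal of the other
generators, and the heap `s_j` is determined by the others. Both numbers also satisfy the same
recursion when two exponents `a_i`, `a_j` are replaced by `2 ^ e - a_i`, `2 ^ e - a_j`: for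
dimensions by linkage, for Nim positions by complementing two heaps.

Hence the Hilbert–Kunz function of `∑ x_a y_a + ∑ z_b ^ 2` counts the exponents below `2 ^ e` for
which the numbers `min u_a v_a` and `⌊w_b / 2⌋` have nim-sum zero. Expanded in the characters of
nim addition, only the trivial character and the characters of single binary digits contribute;
this is a geometric sum when there is no square, and a single digit survives when there is one.
-/

section TruncIdeal

variable {k σ τ : Type*} [Field k]

/-- The ideal generated by the powers `x_s ^ b s` of the variables and one further polynomial `f`.
For constant exponents `b = p ^ e` its colength is the Hilbert–Kunz function of `f`. -/
noncomputable def truncIdeal (b : σ → ℕ) (f : MvPolynomial σ k) : Ideal (MvPolynomial σ k) :=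
  Ideal.span (Set.range (fun s => X s ^ b s) ∪ {f})

lemma X_pow_mem_truncIdeal (b : σ → ℕ) (f : MvPolynomial σ k) (s : σ) :
    X s ^ b s ∈ truncIdeal b f :=
  Ideal.subset_span (Or.inl ⟨s, rfl⟩)

lemma self_mem_truncIdeal (b : σ → ℕ) (f : MvPolynomial σ k) : f ∈ truncIdeal b f :=
  Ideal.subset_span (Or.inr rfl)

lemma truncIdeal_le_iff {b : σ → ℕ} {f : MvPolynomial σ k} {I : Ideal (MvPolynomial σ k)} :
    truncIdeal b f ≤ I ↔ (∀ s, X s ^ b s ∈ I) ∧ f ∈ I := by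
  simp [truncIdeal, Ideal.span_le, Set.insert_subset_iff, Set.range_subset_iff, and_comm]

lemma truncIdeal_eq_top {b : σ → ℕ} {s : σ} (hs : b s = 0) (f : MvPolynomial σ k) :
    truncIdeal b f = ⊤ := by
  rw [Ideal.eq_top_iff_one, ← pow_zero (X s), ← hs]
  exact X_pow_mem_truncIdeal b f s

lemma truncIdeal_sup_span_X_pow [DecidableEq σ] (b : σ → ℕ) (f : MvPolynomial σ k) {s : σ} {n : ℕ}
    (hn : n ≤ b s) :
    truncIdeal b f ⊔ Ideal.span {X s ^ n} = truncIdeal (Function.update b s n) f := by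
  have X_pow_mem := X_pow_mem_truncIdeal (Function.update b s n) f
  have hs : X s ^ n ∈ truncIdeal (Function.update b s n) f := by simpa using X_pow_mem s
  refine le_antisymm (sup_le (truncIdeal_le_iff.2 ⟨fun t => ?_, self_mem_truncIdeal _ _⟩) ?_)
    (truncIdeal_le_iff.2 ⟨fun t => ?_, Ideal.mem_sup_left (self_mem_truncIdeal _ _)⟩)
  · obtain rfl | ht := eq_or_ne t s
    · exact Ideal.mem_of_dvd _ (pow_dvd_pow _ hn) hs
    · simpa [ht] using X_pow_mem t
  · rwa [Ideal.span_singleton_le_iff_mem]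
  · obtain rfl | ht := eq_or_ne t s
    · simpa using Ideal.mem_sup_right (Ideal.mem_span_singleton_self _)
    · simpa [ht] using Ideal.mem_sup_left (X_pow_mem_truncIdeal b f t)

lemma finrank_quotient_truncIdeal_rename (φ : σ ≃ τ) (b : τ → ℕ) (f : MvPolynomial σ k) :
    Module.finrank k (MvPolynomial τ k ⧸ truncIdeal b (rename φ f)) =
      Module.finrank k (MvPolynomial σ k ⧸ truncIdeal (b ∘ φ) f) := by
  have map_eq : truncIdeal b (rename φ f) =
      (truncIdeal (b ∘ φ) f).map (renameEquiv k φ : MvPolynomial σ k →+* MvPolynomial τ k) := by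
    have range_eq : Set.range (fun t => X t ^ b t) =
        (renameEquiv k φ) '' Set.range fun s => (X s : MvPolynomial σ k) ^ b (φ s) := by
      rw [← Set.range_comp, ← φ.surjective.range_comp]
      simp [Function.comp_def]
    simp [truncIdeal, Ideal.map_span, Set.image_insert_eq, range_eq]
  exact (Ideal.quotientEquivAlg _ _ (renameEquiv k φ) map_eq).toLinearEquiv.finrank_eq.symm

end TruncIdeal

section InverseSystem

variable {k σ ι : Type*} [Field k] [Fintype σ] [Fintype ι]

/-- The monomial `∏ s, x_s ^ u s`, with its exponents given by a plain function. -/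
noncomputable def monomialPow (k : Type*) {σ : Type*} [Field k] [Fintype σ] (u : σ → ℕ) :
    MvPolynomial σ k :=
  monomial (Finsupp.equivFunOnFinite.symm u) 1

lemma monomialPow_add (u v : σ → ℕ) :
    monomialPow k (u + v) = monomialPow k u * monomialPow k v := by
  have symm_add : Finsupp.equivFunOnFinite.symm (u + v) =
      Finsupp.equivFunOnFinite.symm u + Finsupp.equivFunOnFinite.symm v := by
    ext
    simp
  simp [monomialPow, monomial_mul, symm_add]

lemma monomialPow_single [DecidableEq σ] (s : σ) (n : ℕ) :
    monomialPow k (Pi.single s n) = X s ^ n := by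
  rw [monomialPow, X_pow_eq_monomial, ← Finsupp.single_eq_pi_single]
  congr
  ext
  simp

/-- The monomial basis of a polynomial ring in finitely many variables, indexed by functions. -/
noncomputable def monomialPowBasis (k σ : Type*) [Field k] [Fintype σ] :
    Module.Basis (σ → ℕ) k (MvPolynomial σ k) :=
  (basisMonomials σ k).reindex Finsupp.equivFunOnFinite

lemma monomialPowBasis_apply (u : σ → ℕ) : monomialPowBasis k σ u = monomialPow k u := by
  simp [monomialPowBasis, monomialPow]

/-- Macaulay's inverse system of the ideal generated by the `x_s ^ b s` and `∑ i, x ^ M i`: the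
linear forms on the polynomial ring that vanish on this ideal, each given by its values on the
monomials. -/
def inverseSystem (k : Type*) [Field k] (b : σ → ℕ) (M : ι → σ → ℕ) :
    Submodule k ((σ → ℕ) → k) where
  carrier := {φ | (∀ u s, b s ≤ u s → φ u = 0) ∧ ∀ u, ∑ i, φ (u + M i) = 0}
  zero_mem' := by simp
  add_mem' {φ ψ} hφ hψ := by
    refine ⟨fun u s h => ?_, fun u => ?_⟩
    · simp [hφ.1 u s h, hψ.1 u s h]
    · simp [Finset.sum_add_distrib, hφ.2, hψ.2]
  smul_mem' c φ hφ := by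
    refine ⟨fun u s h => ?_, fun u => ?_⟩
    · simp [hφ.1 u s h]
    · simp [← Finset.mul_sum, hφ.2]

lemma forall_mem_span_apply_eq_zero_iff {S : Set (MvPolynomial σ k)}
    (ℓ : Module.Dual k (MvPolynomial σ k)) :
    (∀ f ∈ Ideal.span S, ℓ f = 0) ↔ ∀ g ∈ S, ∀ u, ℓ (monomialPow k u * g) = 0 := by
  refine ⟨fun h g hg u => h _ (Ideal.mul_mem_left _ _ (Ideal.subset_span hg)), fun h f hf => ?_⟩
  suffices ∀ r, ℓ (r * f) = 0 by simpa using this 1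
  induction hf using Submodule.span_induction with
  | mem g hg =>
    have comp_eq_zero : ℓ ∘ₗ LinearMap.mulRight k g = 0 :=
      (monomialPowBasis k σ).ext fun u => by simpa [monomialPowBasis_apply] using h g hg u
    exact fun r => LinearMap.congr_fun comp_eq_zero r
  | zero => simp
  | add f g _ _ hf hg => exact fun r => by rw [mul_add, map_add, hf, hg, add_zero]
  | smul c f _ hf => exact fun r => by rw [smul_eq_mul, ← mul_assoc, hf]

lemma mem_inverseSystem_iff (b : σ → ℕ) (M : ι → σ → ℕ) (ℓ : Module.Dual k (MvPolynomial σ k)) :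
    (fun u => ℓ (monomialPow k u)) ∈ inverseSystem k b M ↔
      ∀ f ∈ truncIdeal b (∑ i, monomialPow k (M i)), ℓ f = 0 := by
  classical
  have powers_iff : (∀ u s, b s ≤ u s → ℓ (monomialPow k u) = 0) ↔
      ∀ s u, ℓ (monomialPow k u * X s ^ b s) = 0 := by
    have mul_X_pow (s u) : monomialPow k u * X s ^ b s = monomialPow k (u + Pi.single s (b s)) := by
      rw [monomialPow_add, monomialPow_single]
    simp only [mul_X_pow]
    refine ⟨fun h s u => h _ s (by simp), fun h u s hs => ?_⟩
    have single_le : Pi.single s (b s) ≤ u := update_le_iff.2 ⟨hs, fun _ _ => Nat.zero_le _⟩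
    rw [← tsub_add_cancel_of_le single_le]
    exact h s _
  have sum_iff : (∀ u, ∑ i, ℓ (monomialPow k (u + M i)) = 0) ↔
      ∀ u, ℓ (monomialPow k u * ∑ i, monomialPow k (M i)) = 0 := by
    simp only [Finset.mul_sum, map_sum, monomialPow_add]
  rw [truncIdeal, forall_mem_span_apply_eq_zero_iff]
  simp only [Set.mem_union, or_imp, forall_and, Set.forall_mem_range, Set.mem_singleton_iff,
    forall_eq]
  exact and_congr powers_iff sum_iff

theorem nonempty_dual_quotient_truncIdeal_equiv_inverseSystem (b : σ → ℕ) (M : ι → σ → ℕ) :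
    Nonempty (Module.Dual k (MvPolynomial σ k ⧸ truncIdeal b (∑ i, monomialPow k (M i))) ≃ₗ[k]
      inverseSystem k b M) := by
  set I := (truncIdeal b (∑ i, monomialPow k (M i))).restrictScalars k
  let values : Module.Dual k (MvPolynomial σ k) ≃ₗ[k] ((σ → ℕ) → k) :=
    ((monomialPowBasis k σ).constr k).symm
  have map_eq : I.dualAnnihilator.map values.toLinearMap = inverseSystem k b M := by
    ext φ
    obtain ⟨ℓ, rfl⟩ := values.surjective φ
    have values_apply : values ℓ = fun u => ℓ (monomialPow k u) := by
      ext u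
      simp [values, Module.Basis.constr_symm_apply, monomialPowBasis_apply]
    rw [values_apply, mem_inverseSystem_iff, ← values_apply]
    simp [Submodule.mem_map_equiv, Submodule.mem_dualAnnihilator, I]
  exact ⟨I.dualQuotEquivDualAnnihilator.trans (values.submoduleMap _) |>.trans
    (LinearEquiv.ofEq _ _ map_eq)⟩

theorem finrank_quotient_truncIdeal_eq_inverseSystem (b : σ → ℕ) (M : ι → σ → ℕ) :
    Module.finrank k (MvPolynomial σ k ⧸ truncIdeal b (∑ i, monomialPow k (M i))) =
      Module.finrank k (inverseSystem k b M) := by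
  obtain ⟨φ⟩ := nonempty_dual_quotient_truncIdeal_equiv_inverseSystem (k := k) b M
  rw [← φ.finrank_eq, Subspace.dual_finrank_eq]

section Box

variable [DecidableEq σ]

/-- The exponents `u` with `u s < b s` for all `s`: those of the monomials that survive modulo the
powers `x_s ^ b s`. -/
def box (b : σ → ℕ) : Finset (σ → ℕ) :=
  Fintype.piFinset fun s => Finset.range (b s)

lemma mem_box {b u : σ → ℕ} : u ∈ box b ↔ ∀ s, u s < b s := by
  simp [box]

lemma card_box (b : σ → ℕ) : (box b).card = ∏ s, b s := by
  simp [box]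

lemma inverseSystem_apply_eq_zero {b : σ → ℕ} {M : ι → σ → ℕ} {φ : (σ → ℕ) → k}
    (hφ : φ ∈ inverseSystem k b M) {u : σ → ℕ} (hu : u ∉ box b) : φ u = 0 := by
  obtain ⟨s, hs⟩ := not_forall.1 (mem_box.not.1 hu)
  exact hφ.1 u s (not_lt.1 hs)

lemma inverseSystem_restrict_injective (b : σ → ℕ) (M : ι → σ → ℕ) :
    Function.Injective
      (LinearMap.funLeft k k ((↑) : box b → σ → ℕ) ∘ₗ (inverseSystem k b M).subtype) := by
  refine (injective_iff_map_eq_zero _).2 fun φ hφ => Subtype.ext (funext fun u => ?_)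
  by_cases hu : u ∈ box b
  · exact congr_fun hφ ⟨u, hu⟩
  · exact inverseSystem_apply_eq_zero φ.2 hu

end Box

theorem finrank_quotient_truncIdeal_zero (b : σ → ℕ) :
    Module.finrank k (MvPolynomial σ k ⧸ truncIdeal b 0) = ∏ s, b s := by
  classical
  let M : Empty → σ → ℕ := Empty.elim
  have restrict_surjective : Function.Surjective
      (LinearMap.funLeft k k ((↑) : box b → σ → ℕ) ∘ₗ (inverseSystem k b M).subtype) := by
    intro ψ
    let φ : (σ → ℕ) → k := fun u => if h : u ∈ box b then ψ ⟨u, h⟩ else 0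
    have hφ : φ ∈ inverseSystem k b M :=
      ⟨fun u s hs => dif_neg fun hu => (mem_box.1 hu s).not_ge hs, by simp⟩
    exact ⟨⟨φ, hφ⟩, funext fun u => dif_pos u.2⟩
  rw [← Fintype.sum_empty fun i => monomialPow k (M i),
    finrank_quotient_truncIdeal_eq_inverseSystem,
    (LinearEquiv.ofBijective _
      ⟨inverseSystem_restrict_injective b M, restrict_surjective⟩).finrank_eq,
    Module.finrank_fintype_fun_eq_card, Fintype.card_coe, card_box]

end InverseSystem

section Finite

variable {k σ ι : Type*} [Field k] [Finite σ] [Fintype ι]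

instance inverseSystem.finite (b : σ → ℕ) (M : ι → σ → ℕ) :
    Module.Finite k (inverseSystem k b M) := by
  classical
  cases nonempty_fintype σ
  exact Module.Finite.of_injective _ (inverseSystem_restrict_injective b M)

instance truncIdeal.finite_quotient (b : σ → ℕ) (f : MvPolynomial σ k) :
    Module.Finite k (MvPolynomial σ k ⧸ truncIdeal b f) := by
  cases nonempty_fintype σ
  have finite_zero : Module.Finite k (MvPolynomial σ k ⧸ truncIdeal b (0 : MvPolynomial σ k)) := by
    let M : Empty → σ → ℕ := Empty.elim
    obtain ⟨φ⟩ := nonempty_dual_quotient_truncIdeal_equiv_inverseSystem (k := k) b M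
    rw [← Fintype.sum_empty fun i => monomialPow k (M i), ← Module.finite_dual_iff k]
    exact Module.Finite.equiv φ.symm
  have truncIdeal_zero_le : truncIdeal b 0 ≤ truncIdeal b f :=
    truncIdeal_le_iff.2 ⟨X_pow_mem_truncIdeal b f, zero_mem _⟩
  exact Module.Finite.of_surjective (Ideal.Quotient.factorₐ k truncIdeal_zero_le).toLinearMap
    (Ideal.Quotient.factor_surjective truncIdeal_zero_le)

end Finite

section Chains

variable {k σ ι α : Type*} [Field k] {L : (ι → ℕ) →+ (σ → ℕ)} {pos : (σ → ℕ) → ι → ℕ}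

lemma upperAdjoint_add_map (gc : GaloisConnection L pos) (u : σ → ℕ) (p : ι → ℕ) :
    pos (u + L p) = pos u + p := by
  refine le_antisymm ?_ ((gc _ _).1 ?_)
  · obtain ⟨t, ht⟩ := exists_add_of_le ((gc p (u + L p)).1 le_add_self)
    have map_le : L t ≤ u := by
      have := gc.l_u_le (u + L p)
      rwa [ht, map_add, add_comm, add_le_add_iff_right] at this
    rw [ht, add_comm]
    gcongr
    exact (gc _ _).1 map_le
  · rw [map_add]
    gcongr
    exact gc.l_u_le u

/-- The function on all exponents glued from functions `ψ c` on the chains `p ↦ c + L p`, where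
`pos c = 0`. -/
def glueChains (L : (ι → ℕ) →+ (σ → ℕ)) (pos : (σ → ℕ) → ι → ℕ) (ψ : (σ → ℕ) → (ι → ℕ) → α)
    (u : σ → ℕ) : α :=
  ψ (u - L (pos u)) (pos u)

lemma glueChains_add_map (gc : GaloisConnection L pos) (ψ : (σ → ℕ) → (ι → ℕ) → α) (u : σ → ℕ)
    (p : ι → ℕ) : glueChains L pos ψ (u + L p) = ψ (u - L (pos u)) (pos u + p) := by
  rw [glueChains, upperAdjoint_add_map gc, map_add, add_tsub_add_eq_tsub_right]

lemma upperAdjoint_sub_map_self (gc : GaloisConnection L pos) (u : σ → ℕ) :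
    pos (u - L (pos u)) = 0 := by
  have := upperAdjoint_add_map gc (u - L (pos u)) (pos u)
  rwa [tsub_add_cancel_of_le (gc.l_u_le u), eq_comm, add_eq_right] at this

variable [Fintype σ] [DecidableEq σ]

lemma mem_box_iff_le_sub_one {b u : σ → ℕ} (hb : (box b).Nonempty) : u ∈ box b ↔ u ≤ b - 1 := by
  obtain ⟨c, hc⟩ := hb
  rw [mem_box] at hc ⊢
  exact forall_congr' fun s => Nat.lt_iff_le_pred (Nat.zero_lt_of_lt (hc s))

variable [Fintype ι]

lemma sub_map_mem_filter_box (gc : GaloisConnection L pos) {b u : σ → ℕ} (hu : u ∈ box b) :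
    u - L (pos u) ∈ ({c ∈ box b | pos c = 0} : Finset _) :=
  Finset.mem_filter.2 ⟨mem_box.2 fun s => (Nat.sub_le _ _).trans_lt (mem_box.1 hu s),
    upperAdjoint_sub_map_self gc u⟩

variable [DecidableEq ι]

lemma add_map_mem_box_iff (gc : GaloisConnection L pos) {b c : σ → ℕ} (hc : c ∈ box b)
    (p : ι → ℕ) : c + L p ∈ box b ↔ p ∈ box (pos (b - 1 - c) + 1) := by
  have hbox : (box b).Nonempty := ⟨c, hc⟩
  rw [mem_box_iff_le_sub_one hbox, ← le_tsub_iff_left ((mem_box_iff_le_sub_one hbox).1 hc), gc,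
    mem_box]
  exact forall_congr' fun i => Nat.lt_succ_iff.symm

/-- The restriction of an element of an inverse system to the chain `p ↦ c + L p` of exponents.
When `L` has an upper adjoint `pos`, the chains through the `c` with `pos c = 0` partition all
exponents, and multiplication by the monomials `x ^ L e_i` moves within a chain. -/
def chainRestrict (k : Type*) [Field k] (gc : GaloisConnection L pos) (b : σ → ℕ) {c : σ → ℕ}
    (hc : c ∈ box b) :
    inverseSystem k b (fun i => L (Pi.single i 1)) →ₗ[k]
      inverseSystem k (pos (b - 1 - c) + 1) fun i => Pi.single i 1 :=
  (LinearMap.funLeft k k fun p => c + L p).restrict fun φ hφ => by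
    refine ⟨fun p i hi => ?_, fun p => ?_⟩
    · have hp : p ∉ box (pos (b - 1 - c) + 1) := fun hp => (mem_box.1 hp i).not_ge hi
      exact inverseSystem_apply_eq_zero hφ (mt (add_map_mem_box_iff gc hc p).1 hp)
    · simpa [add_assoc] using hφ.2 (c + L p)

lemma chainRestrict_apply (gc : GaloisConnection L pos) {b c : σ → ℕ} (hc : c ∈ box b)
    (φ : inverseSystem k b fun i => L (Pi.single i 1)) (p : ι → ℕ) :
    (chainRestrict k gc b hc φ : (ι → ℕ) → k) p = (φ : (σ → ℕ) → k) (c + L p) :=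
  rfl

/-- The restriction of an element of an inverse system to all the chains simultaneously. -/
def chainsRestrict (k : Type*) [Field k] (gc : GaloisConnection L pos) (b : σ → ℕ) :
    inverseSystem k b (fun i => L (Pi.single i 1)) →ₗ[k]
      Π c : {c ∈ box b | pos c = 0},
        inverseSystem k (pos (b - 1 - c) + 1) fun i => Pi.single i 1 :=
  LinearMap.pi fun c => chainRestrict k gc b (Finset.mem_filter.1 c.2).1

lemma chainsRestrict_injective (gc : GaloisConnection L pos) (b : σ → ℕ) :
    Function.Injective (chainsRestrict k gc b) := by
  refine (injective_iff_map_eq_zero _).2 fun φ hφ => Subtype.ext (funext fun u => ?_)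
  by_cases hu : u ∈ box b
  · have hc := sub_map_mem_filter_box gc hu
    have := congr_fun (congr_arg Subtype.val (congr_fun hφ ⟨_, hc⟩)) (pos u)
    rwa [chainsRestrict, LinearMap.pi_apply, chainRestrict_apply,
      tsub_add_cancel_of_le (gc.l_u_le u)] at this
  · exact inverseSystem_apply_eq_zero φ.2 hu

lemma glueChains_mem_inverseSystem (gc : GaloisConnection L pos) {b : σ → ℕ}
    {ψ : (σ → ℕ) → (ι → ℕ) → k}
    (hψ : ∀ c ∈ box b, ψ c ∈ inverseSystem k (pos (b - 1 - c) + 1) fun i => Pi.single i 1)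
    (hψ_zero : ∀ c ∉ box b, ψ c = 0) :
    glueChains L pos ψ ∈ inverseSystem k b fun i => L (Pi.single i 1) := by
  refine ⟨fun u s hs => ?_, fun u => ?_⟩ <;> by_cases hc : u - L (pos u) ∈ box b
  · refine inverseSystem_apply_eq_zero (hψ _ hc) ?_
    rw [← add_map_mem_box_iff gc hc, tsub_add_cancel_of_le (gc.l_u_le u)]
    exact fun hu => (mem_box.1 hu s).not_ge hs
  · simp [glueChains, hψ_zero _ hc]
  · simpa only [glueChains_add_map gc] using (hψ _ hc).2 (pos u)
  · simp [glueChains_add_map gc, hψ_zero _ hc]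

lemma chainsRestrict_surjective (gc : GaloisConnection L pos) (b : σ → ℕ) :
    Function.Surjective (chainsRestrict k gc b) := by
  intro ψ
  let ψ' : (σ → ℕ) → (ι → ℕ) → k := fun c =>
    if h : c ∈ ({c ∈ box b | pos c = 0} : Finset _) then ψ ⟨c, h⟩ else 0
  have ψ'_mem c (_ : c ∈ box b) :
      ψ' c ∈ inverseSystem k (pos (b - 1 - c) + 1) fun i => Pi.single i 1 := by
    by_cases h : c ∈ ({c ∈ box b | pos c = 0} : Finset _)
    · simpa only [ψ', dif_pos h] using (ψ ⟨c, h⟩).2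
    · simpa only [ψ', dif_neg h] using zero_mem _
  have ψ'_zero c (hc : c ∉ box b) : ψ' c = 0 := dif_neg fun h => hc (Finset.mem_filter.1 h).1
  refine ⟨⟨_, glueChains_mem_inverseSystem gc ψ'_mem ψ'_zero⟩, funext fun c => Subtype.ext ?_⟩
  funext p
  have pos_eq : pos c = 0 := (Finset.mem_filter.1 c.2).2
  calc glueChains L pos ψ' (c + L p) = ψ' c p := by
        rw [glueChains_add_map gc, pos_eq, map_zero, tsub_zero, zero_add]
    _ = (ψ c : (ι → ℕ) → k) p := congr_fun (dif_pos c.2) p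

theorem finrank_quotient_truncIdeal_eq_sum_chains (gc : GaloisConnection L pos) (b : σ → ℕ) :
    Module.finrank k
        (MvPolynomial σ k ⧸ truncIdeal b (∑ i, monomialPow k (L (Pi.single i 1)))) =
      ∑ c ∈ box b with pos c = 0,
        Module.finrank k (MvPolynomial ι k ⧸ truncIdeal (pos (b - 1 - c) + 1) (∑ i, X i)) := by
  have sum_X_eq : ∑ i, (X i : MvPolynomial ι k) = ∑ i, monomialPow k (Pi.single i 1) := by
    simp [monomialPow_single]
  rw [sum_X_eq, finrank_quotient_truncIdeal_eq_inverseSystem,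
    (LinearEquiv.ofBijective _
      ⟨chainsRestrict_injective gc b, chainsRestrict_surjective gc b⟩).finrank_eq,
    Module.finrank_pi_fintype]
  simp only [finrank_quotient_truncIdeal_eq_inverseSystem]
  exact Finset.sum_coe_sort {c ∈ box b | pos c = 0} fun c =>
    Module.finrank k (inverseSystem k (pos (b - 1 - c) + 1) fun i => Pi.single i 1)

end Chains

section LinearForm

variable {k ι : Type*} [Field k] [Fintype ι] [DecidableEq ι]

/-- The change of coordinates that takes `∑ i, x_i` to `x_j` and fixes the other variables. -/
noncomputable def sumToVariable (k : Type*) {ι : Type*} [Field k] [Fintype ι] [DecidableEq ι]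
    (j : ι) : MvPolynomial ι k ≃ₐ[k] MvPolynomial ι k :=
  AlgEquiv.ofAlgHom
    (aeval (Function.update X j (X j - ∑ i ∈ Finset.univ.erase j, X i)))
    (aeval (Function.update X j (∑ i, X i)))
    (by
      ext i : 1
      obtain rfl | hi := eq_or_ne i j
      · simp [Finset.sum_update_of_mem, Finset.sdiff_singleton_eq_erase]
      · simp [hi])
    (by
      ext i : 1
      obtain rfl | hi := eq_or_ne i j
      · simp [Finset.sum_erase_eq_sub, Finset.sum_update_of_mem, Finset.sdiff_singleton_eq_erase]
      · simp [hi])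

lemma sumToVariable_X_self (j : ι) :
    sumToVariable k j (X j) = X j - ∑ i ∈ Finset.univ.erase j, X i := by
  simp [sumToVariable]

lemma sumToVariable_X_of_ne {i j : ι} (h : i ≠ j) : sumToVariable k j (X i) = X i := by
  simp [sumToVariable, h]

lemma sumToVariable_sum_X (j : ι) : sumToVariable k j (∑ i, X i) = X j := by
  rw [← AlgEquiv.eq_symm_apply]
  simp [sumToVariable]

theorem map_sumToVariable_truncIdeal (p e : ℕ) [ExpChar k p] {a : ι → ℕ} {j : ι}
    (hle : ∀ i ≠ j, a i ≤ p ^ e) (hj : p ^ e ≤ a j) :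
    (truncIdeal a (∑ i, X i)).map (sumToVariable k j) =
      truncIdeal (Function.update a j 1) 0 := by
  set J := truncIdeal (Function.update a j 1) (0 : MvPolynomial ι k)
  have X_pow_mem {i} (hi : i ≠ j) : X i ^ a i ∈ J := by
    simpa [hi] using X_pow_mem_truncIdeal (Function.update a j 1) (0 : MvPolynomial ι k) i
  have X_mem : X j ∈ J := by
    simpa using X_pow_mem_truncIdeal (Function.update a j 1) (0 : MvPolynomial ι k) j
  refine le_antisymm (Ideal.map_le_iff_le_comap.2 (truncIdeal_le_iff.2 ⟨fun i => ?_, ?_⟩))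
    (truncIdeal_le_iff.2 ⟨fun i => ?_, zero_mem _⟩)
  · rw [Ideal.mem_comap, map_pow]
    obtain rfl | hi := eq_or_ne i j
    · refine Ideal.mem_of_dvd _ (pow_dvd_pow _ hj) ?_
      rw [sumToVariable_X_self, sub_pow_expChar_pow, sum_pow_char_pow]
      refine sub_mem (Ideal.pow_mem_of_mem _ X_mem _ (expChar_pow_pos k p e))
        (sum_mem fun t ht => ?_)
      have ht := Finset.ne_of_mem_erase ht
      exact Ideal.mem_of_dvd _ (pow_dvd_pow _ (hle t ht)) (X_pow_mem ht)
    · rw [sumToVariable_X_of_ne hi]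
      exact X_pow_mem hi
  · rwa [Ideal.mem_comap, sumToVariable_sum_X]
  · obtain rfl | hi := eq_or_ne i j
    · rw [Function.update_self, pow_one, ← sumToVariable_sum_X i]
      exact Ideal.mem_map_of_mem _ (self_mem_truncIdeal _ _)
    · rw [Function.update_of_ne hi, ← sumToVariable_X_of_ne hi, ← map_pow]
      exact Ideal.mem_map_of_mem _ (X_pow_mem_truncIdeal _ _ _)

theorem finrank_quotient_truncIdeal_sum_X_of_le (p e : ℕ) [ExpChar k p] {a : ι → ℕ} {j : ι}
    (hle : ∀ i ≠ j, a i ≤ p ^ e) (hj : p ^ e ≤ a j) :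
    Module.finrank k (MvPolynomial ι k ⧸ truncIdeal a (∑ i, X i)) =
      ∏ i ∈ Finset.univ.erase j, a i := by
  rw [(Ideal.quotientEquivAlg _ _ (sumToVariable k j)
      (map_sumToVariable_truncIdeal p e hle hj).symm).toLinearEquiv.finrank_eq,
    finrank_quotient_truncIdeal_zero, ← Finset.mul_prod_erase _ _ (Finset.mem_univ j)]
  simp [Finset.prod_update_of_notMem]

end LinearForm

section Linkage

open Module LinearMap

variable {k V : Type*} [Field k] [AddCommGroup V] [Module k V] [FiniteDimensional k V]

lemma finrank_map_add_finrank_inf_ker (W : Submodule k V) (f : End k V) :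
    finrank k (W.map f) + finrank k ↥(W ⊓ ker f) = finrank k W := by
  rw [← range_domRestrict, ← (f.domRestrict W).finrank_range_add_finrank_ker, ker_domRestrict,
    ← Submodule.finrank_map_subtype_eq, Submodule.map_comap_subtype]

-- Both sides are computed from the rank of `u' * v`, as `u'` kills `range u` and nothing more.
theorem finrank_range_sup_add_finrank_range_inf {u u' v v' : End k V} (hcomm : Commute u' v)
    (hu : ker u' = range u) (hv : ker v = range v') :
    finrank k ↥(range u ⊔ range v) + finrank k ↥(range u' ⊓ range v') = finrank k V := by
  have map_sup : (range u ⊔ range v).map u' = (range u').map v := by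
    rw [Submodule.map_sup, ← range_comp, ← range_comp, ← range_comp, range_le_ker_iff.1 hu.ge,
      range_zero, bot_sup_eq]
    exact congr_arg range hcomm.eq
  have rank_sup := finrank_map_add_finrank_inf_ker (range u ⊔ range v) u'
  rw [map_sup, hu, inf_eq_right.2 le_sup_left] at rank_sup
  have rank_range := finrank_map_add_finrank_inf_ker (range u') v
  rw [hv] at rank_range
  have rank_nullity := u'.finrank_range_add_finrank_ker
  rw [hu] at rank_nullity
  omega

lemma ker_pow_sub_eq_range_pow {x : End k V} {c q : ℕ} (hV : finrank k V = c * q)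
    (hx : ∀ n ≤ q, finrank k (range (x ^ n)) + c * n = finrank k V) {n : ℕ} (hn : n ≤ q) :
    ker (x ^ (q - n)) = range (x ^ n) := by
  have pow_eq_zero : x ^ q = 0 := by
    rw [← range_eq_bot, ← Submodule.finrank_eq_zero (R := k)]
    have := hx q le_rfl
    omega
  have range_le_ker : range (x ^ n) ≤ ker (x ^ (q - n)) := by
    rw [range_le_ker_iff, ← Module.End.mul_eq_comp, ← pow_add, Nat.sub_add_cancel hn, pow_eq_zero]
  refine (Submodule.eq_of_le_of_finrank_eq range_le_ker ?_).symm
  have rank_nullity := (x ^ (q - n)).finrank_range_add_finrank_ker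
  have rank_pow := hx n hn
  have rank_pow_sub := hx (q - n) (Nat.sub_le q n)
  have mul_split : c * (q - n) + c * n = c * q := by rw [← mul_add, Nat.sub_add_cancel hn]
  omega

theorem finrank_quotient_range_pow_sup_range_pow_sub {x y : End k V} (hcomm : Commute x y)
    {c q : ℕ} (hV : finrank k V = c * q)
    (hx : ∀ n ≤ q, finrank k (range (x ^ n)) + c * n = finrank k V)
    (hy : ∀ n ≤ q, finrank k (range (y ^ n)) + c * n = finrank k V) {m n : ℕ} (hm : m ≤ q)
    (hn : n ≤ q) :
    finrank k (V ⧸ range (x ^ m) ⊔ range (y ^ n)) + c * q =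
      c * m + c * n + finrank k (V ⧸ range (x ^ (q - m)) ⊔ range (y ^ (q - n))) := by
  have hker : ker (y ^ n) = range (y ^ (q - n)) := by
    rw [← ker_pow_sub_eq_range_pow hV hy (Nat.sub_le q n), Nat.sub_sub_self hn]
  have linkage := finrank_range_sup_add_finrank_range_inf (hcomm.pow_pow (q - m) n)
    (ker_pow_sub_eq_range_pow hV hx hm) hker
  have inclusion_exclusion :=
    Submodule.finrank_sup_add_finrank_inf_eq (range (x ^ (q - m))) (range (y ^ (q - n)))
  have codim := (range (x ^ m) ⊔ range (y ^ n)).finrank_quotient_add_finrank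
  have codim_sub := (range (x ^ (q - m)) ⊔ range (y ^ (q - n))).finrank_quotient_add_finrank
  have rank_x := hx (q - m) (Nat.sub_le q m)
  have rank_y := hy (q - n) (Nat.sub_le q n)
  have split_m : c * (q - m) + c * m = c * q := by rw [← mul_add, Nat.sub_add_cancel hm]
  have split_n : c * (q - n) + c * n = c * q := by rw [← mul_add, Nat.sub_add_cancel hn]
  omega

variable {A : Type*} [CommRing A] [Algebra k A]

lemma restrictScalars_span_pair (f g : A) :
    (Ideal.span {f, g}).restrictScalars k = range (mulLeft k f) ⊔ range (mulLeft k g) := by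
  ext z
  simp [Ideal.mem_span_pair, Submodule.mem_sup, mul_comm]

lemma finrank_quotient_sup_span_pair (I : Ideal A) (f g : A) :
    finrank k (A ⧸ I ⊔ Ideal.span {f, g}) =
      finrank k ((A ⧸ I) ⧸ range (mulLeft k (Ideal.Quotient.mk I f)) ⊔
        range (mulLeft k (Ideal.Quotient.mk I g))) := by
  have map_span_pair : (Ideal.span {f, g}).map (Ideal.Quotient.mkₐ k I) =
      Ideal.span {Ideal.Quotient.mk I f, Ideal.Quotient.mk I g} := by
    simp [Ideal.map_span, Set.image_pair]
  rw [← (DoubleQuot.quotQuotEquivQuotSupₐ k I (Ideal.span {f, g})).toLinearEquiv.finrank_eq,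
    map_span_pair, ← restrictScalars_span_pair]
  rfl

lemma finrank_range_mulLeft_add_finrank_quotient_sup_span (I : Ideal A) [Module.Finite k (A ⧸ I)]
    (f : A) :
    finrank k (range (mulLeft k (Ideal.Quotient.mk I f))) + finrank k (A ⧸ I ⊔ Ideal.span {f}) =
      finrank k (A ⧸ I) := by
  rw [← Set.pair_eq_singleton, finrank_quotient_sup_span_pair, sup_idem, add_comm,
    Submodule.finrank_quotient_add_finrank]

variable {ι : Type*} [DecidableEq ι]

lemma update_update_le_of_ne {a : ι → ℕ} {q n r : ℕ} (ha : ∀ t, a t ≤ q) (hn : n ≤ q) {i j : ι} :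
    ∀ t ≠ j, Function.update (Function.update a i n) j r t ≤ q := by
  intro t ht
  rw [Function.update_of_ne ht]
  obtain rfl | hti := eq_or_ne t i
  · simpa using hn
  · simpa [hti] using ha t

variable [Fintype ι]

lemma prod_erase_update_update (a : ι → ℕ) {i j : ι} (hij : i ≠ j) (n r : ℕ) :
    ∏ t ∈ Finset.univ.erase j, Function.update (Function.update a i n) j r t =
      (∏ t ∈ (Finset.univ.erase i).erase j, a t) * n := by
  rw [Finset.prod_update_of_notMem (Finset.notMem_erase _ _),
    ← Finset.mul_prod_erase _ _ (Finset.mem_erase.2 ⟨hij, Finset.mem_univ i⟩),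
    Finset.prod_update_of_notMem (Finset.notMem_erase _ _), Function.update_self, mul_comm,
    Finset.erase_right_comm]

lemma finrank_quotient_truncIdeal_sum_X_update (p e : ℕ) [ExpChar k p] {a : ι → ℕ}
    (ha : ∀ t, a t ≤ p ^ e) {i j : ι} (hij : i ≠ j) {n : ℕ} (hn : n ≤ p ^ e) :
    finrank k (MvPolynomial ι k ⧸ truncIdeal
        (Function.update (Function.update a i n) j (p ^ e)) (∑ t, X t)) =
      (∏ t ∈ (Finset.univ.erase i).erase j, a t) * n := by
  rw [finrank_quotient_truncIdeal_sum_X_of_le p e (update_update_le_of_ne ha hn) (by simp),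
    prod_erase_update_update _ hij]

lemma finrank_range_mulLeft_X_pow_add (p e : ℕ) [ExpChar k p] {a : ι → ℕ}
    (ha : ∀ t, a t ≤ p ^ e) {i j : ι} (hij : i ≠ j) {J : Ideal (MvPolynomial ι k)}
    (hJ : J = truncIdeal (Function.update (Function.update a i (p ^ e)) j (p ^ e)) (∑ t, X t))
    {n : ℕ} (hn : n ≤ p ^ e) :
    finrank k (range (mulLeft k (Ideal.Quotient.mk J (X i)) ^ n)) +
        (∏ t ∈ (Finset.univ.erase i).erase j, a t) * n =
      finrank k (MvPolynomial ι k ⧸ J) := by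
  subst hJ
  rw [pow_mulLeft, ← map_pow, ← finrank_range_mulLeft_add_finrank_quotient_sup_span _ (X i ^ n),
    truncIdeal_sup_span_X_pow _ _ (by simpa [hij] using hn), Function.update_comm hij.symm,
    Function.update_idem, finrank_quotient_truncIdeal_sum_X_update p e ha hij hn]

-- Linkage of `x_i ^ a i` and `x_j ^ a j` modulo `truncIdeal` with both exponents raised to `p ^ e`.
theorem finrank_quotient_truncIdeal_sum_X_flip (p e : ℕ) [ExpChar k p] {a : ι → ℕ}
    (ha : ∀ t, a t ≤ p ^ e) {i j : ι} (hij : i ≠ j) :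
    finrank k (MvPolynomial ι k ⧸ truncIdeal a (∑ t, X t)) +
        (∏ t ∈ (Finset.univ.erase i).erase j, a t) * p ^ e =
      (∏ t ∈ (Finset.univ.erase i).erase j, a t) * a i +
        (∏ t ∈ (Finset.univ.erase i).erase j, a t) * a j +
        finrank k (MvPolynomial ι k ⧸ truncIdeal
          (Function.update (Function.update a i (p ^ e - a i)) j (p ^ e - a j)) (∑ t, X t)) := by
  set J := truncIdeal (Function.update (Function.update a i (p ^ e)) j (p ^ e))
    (∑ t, X t : MvPolynomial ι k) with hJ
  let x := mulLeft k (Ideal.Quotient.mk J (X i))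
  let y := mulLeft k (Ideal.Quotient.mk J (X j))
  have finrank_pair {m n : ℕ} (hm : m ≤ p ^ e) (hn : n ≤ p ^ e) :
      finrank k ((MvPolynomial ι k ⧸ J) ⧸ range (x ^ m) ⊔ range (y ^ n)) =
        finrank k (MvPolynomial ι k ⧸ truncIdeal (Function.update (Function.update a i m) j n)
          (∑ t, X t)) := by
    rw [pow_mulLeft, pow_mulLeft, ← map_pow, ← map_pow, ← finrank_quotient_sup_span_pair,
      Ideal.span_insert, ← sup_assoc, truncIdeal_sup_span_X_pow _ _ (by simpa [hij] using hm),
      truncIdeal_sup_span_X_pow _ _ (by simpa [hij.symm] using hn), Function.update_comm hij.symm,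
      Function.update_idem, Function.update_idem]
  have hJ_swap : J = truncIdeal (Function.update (Function.update a j (p ^ e)) i (p ^ e))
      (∑ t, X t) := by rw [hJ, Function.update_comm hij]
  have key := finrank_quotient_range_pow_sup_range_pow_sub
    (show Commute x y from (Commute.all _ _).map (Algebra.lmul k (MvPolynomial ι k ⧸ J)))
    (finrank_quotient_truncIdeal_sum_X_update p e ha hij le_rfl)
    (fun n hn => finrank_range_mulLeft_X_pow_add p e ha hij hJ hn)
    (fun n hn => by
      simpa only [Finset.erase_right_comm] using
        finrank_range_mulLeft_X_pow_add p e ha hij.symm hJ_swap hn)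
    (ha i) (ha j)
  rwa [finrank_pair (ha i) (ha j), finrank_pair (Nat.sub_le _ _) (Nat.sub_le _ _),
    Function.update_eq_self, Function.update_eq_self] at key

end Linkage

section NimSum

variable {ι : Type*}

/-- The nim-sum (bitwise exclusive or) of the entries of `s` indexed by `S`. -/
def nimSum (S : Finset ι) (s : ι → ℕ) : ℕ :=
  S.fold (· ^^^ ·) 0 s

lemma nimSum_congr {S : Finset ι} {s t : ι → ℕ} (h : ∀ i ∈ S, s i = t i) :
    nimSum S s = nimSum S t :=
  Finset.fold_congr h

lemma nimSum_cons {S : Finset ι} {i : ι} (hi : i ∉ S) (s : ι → ℕ) :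
    nimSum (S.cons i hi) s = s i ^^^ nimSum S s :=
  Finset.fold_cons hi

lemma nimSum_lt_two_pow {S : Finset ι} {s : ι → ℕ} {e : ℕ} (h : ∀ i ∈ S, s i < 2 ^ e) :
    nimSum S s < 2 ^ e := by
  induction S using Finset.cons_induction with
  | empty => exact Nat.two_pow_pos e
  | cons i S hi ih =>
    rw [Finset.forall_mem_cons] at h
    rw [nimSum_cons]
    exact Nat.xor_lt_two_pow h.1 (ih h.2)

variable [DecidableEq ι]

lemma nimSum_eq_xor_nimSum_erase {S : Finset ι} {j : ι} (hj : j ∈ S) (s : ι → ℕ) :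
    nimSum S s = s j ^^^ nimSum (S.erase j) s := by
  rw [nimSum, ← Finset.insert_erase hj, Finset.fold_insert (Finset.notMem_erase j S),
    Finset.erase_insert (Finset.notMem_erase j S), nimSum]

lemma nimSum_update_of_notMem {S : Finset ι} {j : ι} (hj : j ∉ S) (s : ι → ℕ) (v : ℕ) :
    nimSum S (Function.update s j v) = nimSum S s :=
  nimSum_congr fun _ hi => Function.update_of_ne (ne_of_mem_of_not_mem hi hj) _ _

lemma nimSum_update {S : Finset ι} {j : ι} (hj : j ∈ S) (s : ι → ℕ) (v : ℕ) :
    nimSum S (Function.update s j v) = v ^^^ nimSum (S.erase j) s := by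
  rw [nimSum_eq_xor_nimSum_erase hj, Function.update_self,
    nimSum_update_of_notMem (Finset.notMem_erase j S)]

lemma two_pow_sub_one_sub_eq_xor {t e : ℕ} (ht : t < 2 ^ e) :
    2 ^ e - 1 - t = t ^^^ (2 ^ e - 1) := by
  refine Nat.eq_of_testBit_eq fun n => ?_
  rw [Nat.sub_sub, add_comm 1 t, Nat.testBit_two_pow_sub_succ ht, Nat.testBit_xor,
    Nat.testBit_two_pow_sub_one]
  by_cases hn : n < e
  · simp [hn]
  · simp [hn, Nat.testBit_lt_two_pow (ht.trans_le (Nat.pow_le_pow_right two_pos (not_lt.1 hn)))]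

/-- Replace the entries `i` and `j` of `s` by their complements `q - 1 - s i` and `q - 1 - s j`. -/
def complementPair (q : ℕ) (i j : ι) (s : ι → ℕ) : ι → ℕ :=
  Function.update (Function.update s i (q - 1 - s i)) j (q - 1 - s j)

lemma complementPair_left {q : ℕ} {i j : ι} (hij : i ≠ j) (s : ι → ℕ) :
    complementPair q i j s i = q - 1 - s i := by
  simp [complementPair, hij]

lemma complementPair_right {q : ℕ} (i j : ι) (s : ι → ℕ) :
    complementPair q i j s j = q - 1 - s j := by
  simp [complementPair]

lemma complementPair_of_ne {q : ℕ} {i j t : ι} (hti : t ≠ i) (htj : t ≠ j) (s : ι → ℕ) :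
    complementPair q i j s t = s t := by
  simp [complementPair, hti, htj]

lemma complementPair_complementPair {q : ℕ} {i j : ι} (hij : i ≠ j) {s : ι → ℕ} (hi : s i < q)
    (hj : s j < q) : complementPair q i j (complementPair q i j s) = s := by
  funext t
  obtain rfl | hti := eq_or_ne t i
  · rw [complementPair_left hij, complementPair_left hij]
    omega
  obtain rfl | htj := eq_or_ne t j
  · rw [complementPair_right, complementPair_right]
    omega
  · rw [complementPair_of_ne hti htj, complementPair_of_ne hti htj]

lemma nimSum_complementPair {S : Finset ι} {i j : ι} (hi : i ∈ S) (hj : j ∈ S) (hij : i ≠ j)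
    {s : ι → ℕ} {e : ℕ} (his : s i < 2 ^ e) (hjs : s j < 2 ^ e) :
    nimSum S (complementPair (2 ^ e) i j s) = nimSum S s := by
  have hi' : i ∈ S.erase j := Finset.mem_erase.2 ⟨hij, hi⟩
  rw [complementPair, nimSum_update hj, nimSum_update hi', nimSum_eq_xor_nimSum_erase hj s,
    nimSum_eq_xor_nimSum_erase hi' s, two_pow_sub_one_sub_eq_xor his,
    two_pow_sub_one_sub_eq_xor hjs, Nat.xor_assoc, ← Nat.xor_assoc _ (s i ^^^ _),
    Nat.xor_comm _ (s i ^^^ _), Nat.xor_assoc, Nat.xor_assoc, Nat.xor_xor_cancel_left]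

end NimSum

section NimCount

variable {ι : Type*} [Fintype ι] [DecidableEq ι]

lemma mem_box_update {a s : ι → ℕ} {j : ι} {n : ℕ} :
    s ∈ box (Function.update a j n) ↔ s j < n ∧ ∀ i ≠ j, s i < a i :=
  mem_box.trans (Function.forall_update_iff a fun i v => s i < v)

lemma update_mem_box {a s : ι → ℕ} {j : ι} {v : ℕ} :
    Function.update s j v ∈ box a ↔ v < a j ∧ ∀ i ≠ j, s i < a i :=
  mem_box.trans (Function.forall_update_iff s fun i v => v < a i)

lemma mem_box_update_update {a s : ι → ℕ} {i j : ι} (hij : i ≠ j) {m n : ℕ} :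
    s ∈ box (Function.update (Function.update a i m) j n) ↔
      s i < m ∧ s j < n ∧ ∀ t, t ≠ i → t ≠ j → s t < a t := by
  rw [mem_box_update]
  refine ⟨fun h => ⟨?_, h.1, fun t hti htj => ?_⟩, fun h => ⟨h.2.1, fun t htj => ?_⟩⟩
  · simpa using h.2 i hij
  · simpa [hti] using h.2 t htj
  · obtain rfl | hti := eq_or_ne t i
    · simpa using h.1
    · simpa [hti] using h.2.2 t hti htj

lemma filter_lt_box {a : ι → ℕ} {j : ι} {n : ℕ} (hn : n ≤ a j) :
    {s ∈ box a | s j < n} = box (Function.update a j n) := by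
  ext s
  rw [Finset.mem_filter, mem_box_update, mem_box]
  refine ⟨fun h => ⟨h.2, fun i _ => h.1 i⟩, fun h => ⟨fun i => ?_, h.1⟩⟩
  obtain rfl | hi := eq_or_ne i j
  · exact h.1.trans_le hn
  · exact h.2 i hi

/-- The number of positions in `box a` with vanishing nim-sum. -/
def nimCount (a : ι → ℕ) : ℕ :=
  {s ∈ box a | nimSum Finset.univ s = 0}.card

-- The `j`-th entry is determined by the others, and its bound leaves room for every value.
theorem nimCount_of_le {a : ι → ℕ} {j : ι} {e : ℕ} (hle : ∀ i ≠ j, a i ≤ 2 ^ e)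
    (hj : 2 ^ e ≤ a j) : nimCount a = ∏ i ∈ Finset.univ.erase j, a i := by
  have card_eq : (box (Function.update a j 1)).card = ∏ i ∈ Finset.univ.erase j, a i := by
    rw [card_box, ← Finset.mul_prod_erase _ _ (Finset.mem_univ j)]
    simp [Finset.prod_update_of_notMem]
  have nimSum_eq_zero_iff (s : ι → ℕ) :
      nimSum Finset.univ s = 0 ↔ s j = nimSum (Finset.univ.erase j) s := by
    rw [nimSum_eq_xor_nimSum_erase (Finset.mem_univ j), Nat.xor_eq_zero_iff]
  rw [← card_eq, nimCount]
  refine Finset.card_nbij' (fun s => Function.update s j 0)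
    (fun s => Function.update s j (nimSum (Finset.univ.erase j) s)) ?_ ?_ ?_ ?_
  · intro s hs
    rw [Finset.mem_coe, Finset.mem_filter, mem_box] at hs
    rw [Finset.mem_coe, update_mem_box, Function.update_self]
    exact ⟨one_pos, fun i hi => by simpa [hi] using hs.1 i⟩
  · intro s hs
    rw [Finset.mem_coe, mem_box_update] at hs
    have nimSum_lt : nimSum (Finset.univ.erase j) s < 2 ^ e := nimSum_lt_two_pow fun i hi =>
      (hs.2 i (Finset.ne_of_mem_erase hi)).trans_le (hle i (Finset.ne_of_mem_erase hi))
    rw [Finset.mem_coe, Finset.mem_filter, update_mem_box, nimSum_update (Finset.mem_univ j)]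
    exact ⟨⟨nimSum_lt.trans_le hj, hs.2⟩, Nat.xor_self _⟩
  · intro s hs
    have hs := (nimSum_eq_zero_iff s).1 (Finset.mem_filter.1 hs).2
    simp [nimSum_update_of_notMem, ← hs]
  · intro s hs
    have hs : s j = 0 := Nat.lt_one_iff.1 (mem_box_update.1 hs).1
    simp [← hs]

lemma nimCount_update {a : ι → ℕ} {e : ℕ} (ha : ∀ t, a t ≤ 2 ^ e) {i j : ι} (hij : i ≠ j) {n : ℕ}
    (hn : n ≤ 2 ^ e) :
    nimCount (Function.update (Function.update a i n) j (2 ^ e)) =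
      (∏ t ∈ (Finset.univ.erase i).erase j, a t) * n := by
  rw [nimCount_of_le (update_update_le_of_ne ha hn) (by simp), prod_erase_update_update _ hij]

lemma card_filter_lt_nimSum_eq_zero {a : ι → ℕ} {j : ι} {n : ℕ} (hn : n ≤ a j) :
    {s ∈ box a | nimSum Finset.univ s = 0 ∧ s j < n}.card = nimCount (Function.update a j n) := by
  rw [← Finset.filter_filter, Finset.filter_comm, filter_lt_box hn, nimCount]

lemma card_filter_ge_nimSum_eq_zero {a : ι → ℕ} {e : ℕ} {i j : ι} (hij : i ≠ j) :
    {s ∈ box (Function.update (Function.update a i (2 ^ e)) j (2 ^ e)) |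
        nimSum Finset.univ s = 0 ∧ ¬(s i < a i ∨ s j < a j)}.card =
      nimCount (Function.update (Function.update a i (2 ^ e - a i)) j (2 ^ e - a j)) := by
  refine Finset.card_nbij' (complementPair (2 ^ e) i j) (complementPair (2 ^ e) i j) ?_ ?_ ?_ ?_
  · intro s hs
    rw [Finset.mem_coe, Finset.mem_filter, mem_box_update_update hij] at hs
    rw [Finset.mem_coe, Finset.mem_filter, mem_box_update_update hij,
      nimSum_complementPair (Finset.mem_univ i) (Finset.mem_univ j) hij (by omega) (by omega),
      complementPair_left hij, complementPair_right]
    refine ⟨⟨by omega, by omega, fun t hti htj => ?_⟩, hs.2.1⟩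
    exact (complementPair_of_ne hti htj s).trans_lt (hs.1.2.2 t hti htj)
  · intro s hs
    rw [Finset.mem_coe, Finset.mem_filter, mem_box_update_update hij] at hs
    rw [Finset.mem_coe, Finset.mem_filter, mem_box_update_update hij,
      nimSum_complementPair (Finset.mem_univ i) (Finset.mem_univ j) hij (by omega) (by omega),
      complementPair_left hij, complementPair_right]
    refine ⟨⟨by omega, by omega, fun t hti htj => ?_⟩, hs.2, by omega⟩
    exact (complementPair_of_ne hti htj s).trans_lt (hs.1.2.2 t hti htj)
  · intro s hs
    rw [Finset.mem_coe, Finset.mem_filter, mem_box_update_update hij] at hs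
    exact complementPair_complementPair hij hs.1.1 hs.1.2.1
  · intro s hs
    rw [Finset.mem_coe, Finset.mem_filter, mem_box_update_update hij] at hs
    exact complementPair_complementPair hij (by omega) (by omega)

theorem nimCount_flip {a : ι → ℕ} {e : ℕ} (ha : ∀ t, a t ≤ 2 ^ e) {i j : ι} (hij : i ≠ j) :
    nimCount a + (∏ t ∈ (Finset.univ.erase i).erase j, a t) * 2 ^ e =
      (∏ t ∈ (Finset.univ.erase i).erase j, a t) * a i +
        (∏ t ∈ (Finset.univ.erase i).erase j, a t) * a j +
        nimCount (Function.update (Function.update a i (2 ^ e - a i)) j (2 ^ e - a j)) := by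
  let b := Function.update (Function.update a i (2 ^ e)) j (2 ^ e)
  let E := {s ∈ box b | nimSum Finset.univ s = 0}
  have hbi : a i ≤ b i := by simpa [b, hij] using ha i
  have hbj : a j ≤ b j := by simpa [b] using ha j
  have card_E : E.card = (∏ t ∈ (Finset.univ.erase i).erase j, a t) * 2 ^ e :=
    nimCount_update ha hij le_rfl
  have card_lt_i : {s ∈ E | s i < a i}.card =
      (∏ t ∈ (Finset.univ.erase i).erase j, a t) * a i := by
    rw [Finset.filter_filter, card_filter_lt_nimSum_eq_zero hbi, ← nimCount_update ha hij (ha i),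
      Function.update_comm hij.symm, Function.update_idem]
  have card_lt_j : {s ∈ E | s j < a j}.card =
      (∏ t ∈ (Finset.univ.erase i).erase j, a t) * a j := by
    rw [Finset.filter_filter, card_filter_lt_nimSum_eq_zero hbj, Finset.erase_right_comm,
      ← nimCount_update ha hij.symm (ha j), Function.update_idem, Function.update_comm hij]
  have card_lt_and : {s ∈ E | s i < a i ∧ s j < a j}.card = nimCount a := by
    have filter_eq_box : {s ∈ box b | s i < a i ∧ s j < a j} = box a := by
      rw [← Finset.filter_filter, filter_lt_box hbi, filter_lt_box (by simpa [hij.symm] using hbj)]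
      simp [b, Function.update_comm hij.symm]
    rw [Finset.filter_comm, filter_eq_box, nimCount]
  have card_not_lt : {s ∈ E | ¬(s i < a i ∨ s j < a j)}.card =
      nimCount (Function.update (Function.update a i (2 ^ e - a i)) j (2 ^ e - a j)) := by
    rw [Finset.filter_filter, card_filter_ge_nimSum_eq_zero hij]
  have inclusion_exclusion :=
    Finset.card_union_add_card_inter {s ∈ E | s i < a i} {s ∈ E | s j < a j}
  rw [← Finset.filter_or, ← Finset.filter_and] at inclusion_exclusion
  have split := Finset.card_filter_add_card_filter_not (s := E) fun s => s i < a i ∨ s j < a j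
  omega

end NimCount

section SumOfVariables

variable {k ι : Type*} [Field k] [Fintype ι] [DecidableEq ι]

lemma sum_update_update_lt {a : ι → ℕ} {i j : ι} (hij : i ≠ j) {m n : ℕ} (hm : m < a i)
    (hn : n < a j) : ∑ t, Function.update (Function.update a i m) j n t < ∑ t, a t := by
  refine Finset.sum_lt_sum (fun t _ => ?_) ⟨i, Finset.mem_univ i, by simpa [hij] using hm⟩
  exact update_le_iff.2 ⟨hn.le, fun t _ => update_le_iff.2 ⟨hm.le, fun _ _ => le_rfl⟩ t⟩ t

theorem finrank_quotient_truncIdeal_sum_X_eq_nimCount [CharP k 2] (a : ι → ℕ) :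
    Module.finrank k (MvPolynomial ι k ⧸ truncIdeal a (∑ i, X i)) = nimCount a := by
  induction a using (measure fun a : ι → ℕ => ∑ i, a i).wf.induction with
  | _ a ih
  obtain hι | hι := isEmpty_or_nonempty ι
  · rw [Fintype.sum_empty, finrank_quotient_truncIdeal_zero]
    simp [nimCount, nimSum, box]
  obtain ⟨i, hi⟩ := Finite.exists_max a
  obtain hi0 | hi0 := eq_or_ne (a i) 0
  · have box_eq_empty : box a = ∅ := Finset.card_eq_zero.1 <| by
      rw [card_box, Finset.prod_eq_zero (Finset.mem_univ i) hi0]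
    rw [truncIdeal_eq_top hi0, nimCount, box_eq_empty, Finset.filter_empty, Finset.card_empty]
    exact Module.finrank_zero_of_subsingleton
  obtain ⟨e, two_pow_le, lt_two_pow⟩ : ∃ e, 2 ^ e ≤ a i ∧ a i < 2 ^ (e + 1) :=
    ⟨Nat.log 2 (a i), Nat.pow_log_le_self 2 hi0, Nat.lt_pow_succ_log_self one_lt_two (a i)⟩
  by_cases hle : ∀ j ≠ i, a j ≤ 2 ^ e
  · rw [finrank_quotient_truncIdeal_sum_X_of_le 2 e hle two_pow_le, nimCount_of_le hle two_pow_le]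
  push Not at hle
  obtain ⟨j, hji, hj⟩ := hle
  have ha t : a t ≤ 2 ^ (e + 1) := (hi t).trans lt_two_pow.le
  have hi' : 2 ^ (e + 1) - a i < a i := by have := hi j; omega
  have hj' : 2 ^ (e + 1) - a j < a j := by omega
  have sum_lt := sum_update_update_lt hji.symm hi' hj'
  have flip := finrank_quotient_truncIdeal_sum_X_flip (k := k) 2 (e + 1) ha hji.symm
  rw [ih _ sum_lt] at flip
  have nim_flip := nimCount_flip ha hji.symm
  omega

end SumOfVariables

section NimChains

variable {k σ ι : Type*} [Field k] [Fintype σ] [DecidableEq σ] [Fintype ι] [DecidableEq ι]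
  {L : (ι → ℕ) →+ (σ → ℕ)} {pos : (σ → ℕ) → ι → ℕ}

lemma card_chain_nimSum_eq_zero (gc : GaloisConnection L pos) {b c : σ → ℕ} (hc : c ∈ box b)
    (pos_eq : pos c = 0) :
    {u ∈ box b | nimSum Finset.univ (pos u) = 0 ∧ u - L (pos u) = c}.card =
      nimCount (pos (b - 1 - c) + 1) := by
  have pos_add p : pos (c + L p) = p := by rw [upperAdjoint_add_map gc, pos_eq, zero_add]
  refine Finset.card_nbij' pos (fun p => c + L p) ?_ ?_ ?_ ?_
  · intro u hu
    obtain ⟨hu, nimSum_eq, rfl⟩ := Finset.mem_filter.1 hu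
    refine Finset.mem_filter.2 ⟨(add_map_mem_box_iff gc hc _).1 ?_, nimSum_eq⟩
    rwa [tsub_add_cancel_of_le (gc.l_u_le u)]
  · intro p hp
    obtain ⟨hp, nimSum_eq⟩ := Finset.mem_filter.1 hp
    refine Finset.mem_filter.2 ⟨(add_map_mem_box_iff gc hc p).2 hp, ?_, ?_⟩
    · rwa [pos_add]
    · rw [pos_add, add_tsub_cancel_right]
  · intro u hu
    obtain ⟨-, -, rfl⟩ := Finset.mem_filter.1 hu
    exact tsub_add_cancel_of_le (gc.l_u_le u)
  · exact fun p _ => pos_add p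

theorem finrank_quotient_truncIdeal_eq_card_nimSum [CharP k 2] (gc : GaloisConnection L pos)
    (b : σ → ℕ) :
    Module.finrank k
        (MvPolynomial σ k ⧸ truncIdeal b (∑ i, monomialPow k (L (Pi.single i 1)))) =
      {u ∈ box b | nimSum Finset.univ (pos u) = 0}.card := by
  rw [finrank_quotient_truncIdeal_eq_sum_chains gc, Finset.card_eq_sum_card_fiberwise
    (f := fun u => u - L (pos u)) (t := {c ∈ box b | pos c = 0})
    fun u hu => sub_map_mem_filter_box gc (Finset.mem_filter.1 hu).1]
  refine Finset.sum_congr rfl fun c hc => ?_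
  obtain ⟨hc, pos_eq⟩ := Finset.mem_filter.1 hc
  rw [finrank_quotient_truncIdeal_sum_X_eq_nimCount, Finset.filter_filter,
    card_chain_nimSum_eq_zero gc hc pos_eq]

end NimChains

section BitCharacters

/-- The character `(-1) ^ t_j` of the group `ℕ` under nim addition, where `t_j` is the `j`-th binary
digit of `t`. -/
def bitSign (j t : ℕ) : ℤ :=
  if t.testBit j then -1 else 1

lemma bitSign_xor (j s t : ℕ) : bitSign j (s ^^^ t) = bitSign j s * bitSign j t := by
  cases hs : s.testBit j <;> cases ht : t.testBit j <;> simp [bitSign, hs, ht]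

/-- The Walsh function of a set `r` of digit positions: the product of the characters
`bitSign j` over `j ∈ r`. -/
def walsh (r : Finset ℕ) (t : ℕ) : ℤ :=
  ∏ j ∈ r, bitSign j t

lemma walsh_empty (t : ℕ) : walsh ∅ t = 1 :=
  Finset.prod_empty

lemma walsh_singleton (j t : ℕ) : walsh {j} t = bitSign j t :=
  Finset.prod_singleton _ _

lemma walsh_nimSum {ι : Type*} (r : Finset ℕ) (S : Finset ι) (s : ι → ℕ) :
    walsh r (nimSum S s) = ∏ i ∈ S, walsh r (s i) := by
  induction S using Finset.cons_induction with
  | empty => simp [walsh, nimSum, bitSign]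
  | cons i S hi ih =>
    rw [nimSum_cons, Finset.prod_cons, ← ih]
    simp only [walsh, bitSign_xor, Finset.prod_mul_distrib]

lemma sum_range_two_pow_prod_testBit (e : ℕ) (f : ℕ → Bool → ℤ) :
    ∑ t ∈ Finset.range (2 ^ e), ∏ j ∈ Finset.range e, f j (t.testBit j) =
      ∏ j ∈ Finset.range e, (f j false + f j true) := by
  induction e with
  | zero => simp
  | succ e ih =>
    have low_digits t : ∏ j ∈ Finset.range e, f j ((2 ^ e + t).testBit j) =
        ∏ j ∈ Finset.range e, f j (t.testBit j) :=
      Finset.prod_congr rfl fun j hj => by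
        rw [Nat.testBit_two_pow_add_gt (Finset.mem_range.1 hj)]
    rw [pow_succ, mul_two, Finset.sum_range_add, Finset.prod_range_succ, ← ih, mul_add,
      Finset.sum_mul, Finset.sum_mul]
    congr 1 <;> refine Finset.sum_congr rfl fun t ht => ?_ <;> rw [Finset.prod_range_succ]
    · rw [Nat.testBit_lt_two_pow (Finset.mem_range.1 ht)]
    · rw [low_digits, Nat.testBit_two_pow_add_eq,
        Nat.testBit_lt_two_pow (Finset.mem_range.1 ht), Bool.not_false]

theorem sum_range_two_pow_walsh_mul_walsh {e : ℕ} {r s : Finset ℕ} (hr : r ⊆ Finset.range e)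
    (hs : s ⊆ Finset.range e) :
    ∑ t ∈ Finset.range (2 ^ e), walsh r t * walsh s t = if r = s then 2 ^ e else 0 := by
  let f (r : Finset ℕ) (j : ℕ) (b : Bool) : ℤ := if j ∈ r ∧ b then -1 else 1
  have walsh_eq {r : Finset ℕ} (hr : r ⊆ Finset.range e) t :
      walsh r t = ∏ j ∈ Finset.range e, f r j (t.testBit j) := by
    rw [walsh, ← Finset.prod_subset hr fun j _ hj => by simp [f, hj]]
    exact Finset.prod_congr rfl fun j hj => by simp [f, hj, bitSign]
  have factor j : f r j false * f s j false + f r j true * f s j true =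
      if j ∈ r ↔ j ∈ s then 2 else 0 := by
    by_cases hjr : j ∈ r <;> by_cases hjs : j ∈ s <;> simp [f, hjr, hjs]
  simp only [walsh_eq hr, walsh_eq hs, ← Finset.prod_mul_distrib]
  rw [sum_range_two_pow_prod_testBit e fun j b => f r j b * f s j b]
  simp only [factor]
  split_ifs with hrs
  · simp [hrs]
  · obtain ⟨j, hj⟩ := not_forall.1 (mt Finset.ext hrs)
    refine Finset.prod_eq_zero (i := j) ?_ (if_neg hj)
    by_contra hje
    exact hj (iff_of_false (mt (@hr j) hje) (mt (@hs j) hje))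

lemma sum_powerset_walsh {e t : ℕ} (ht : t < 2 ^ e) :
    ∑ r ∈ (Finset.range e).powerset, walsh r t = if t = 0 then 2 ^ e else 0 := by
  simp only [walsh, ← Finset.prod_one_add]
  split_ifs with h
  · simp [h, bitSign, one_add_one_eq_two]
  · obtain ⟨j, hj⟩ : ∃ j, t.testBit j := by
      by_contra! hbits
      exact h (Nat.zero_of_testBit_eq_false fun j => by simpa using hbits j)
    have hje : j < e := by
      by_contra! hej
      simp [Nat.testBit_lt_two_pow (ht.trans_le (Nat.pow_le_pow_right two_pos hej))] at hj
    exact Finset.prod_eq_zero (Finset.mem_range.2 hje) (by simp [bitSign, hj])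

theorem two_pow_mul_card_nimSum_eq_zero {ι α : Type*} [Fintype ι] {e : ℕ} (P : Finset α)
    (g : α → ι → ℕ) (hg : ∀ w ∈ P, ∀ i, g w i < 2 ^ e) :
    (2 ^ e * {w ∈ P | nimSum Finset.univ (g w) = 0}.card : ℤ) =
      ∑ r ∈ (Finset.range e).powerset, ∑ w ∈ P, ∏ i, walsh r (g w i) := by
  simp only [Finset.sum_comm (s := (Finset.range e).powerset), ← walsh_nimSum]
  rw [Finset.sum_congr rfl fun w hw =>
    sum_powerset_walsh (nimSum_lt_two_pow fun i _ => hg w hw i)]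
  simp [Finset.sum_ite, mul_comm]

end BitCharacters

section WalshSums

lemma sum_two_pow_mul_bitSign {e t : ℕ} (ht : t < 2 ^ e) :
    ∑ j ∈ Finset.range e, 2 ^ j * bitSign j t = 2 ^ e - 1 - 2 * t := by
  suffices h : ∑ j ∈ Finset.range e, 2 ^ j * bitSign j t = 2 ^ e - 1 - 2 * ↑(t % 2 ^ e) by
    rw [h, Nat.mod_eq_of_lt ht]
  clear ht
  induction e with
  | zero => simp [Nat.mod_one]
  | succ e ih =>
    rw [Finset.sum_range_succ, ih, Nat.mod_pow_succ, ← Nat.toNat_testBit]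
    cases h : t.testBit e <;> simp [bitSign, h] <;> ring

lemma sum_range_sum_range_min (F : ℕ → ℤ) (n : ℕ) :
    ∑ u ∈ Finset.range n, ∑ v ∈ Finset.range n, F (min u v) =
      ∑ t ∈ Finset.range n, (2 * (n - t) - 1) * F t := by
  induction n with
  | zero => simp
  | succ n ih =>
    have min_left : ∑ u ∈ Finset.range n, F (min u n) = ∑ u ∈ Finset.range n, F u :=
      Finset.sum_congr rfl fun u hu => by rw [min_eq_left (Finset.mem_range.1 hu).le]
    have min_right : ∑ v ∈ Finset.range n, F (min n v) = ∑ v ∈ Finset.range n, F v :=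
      Finset.sum_congr rfl fun v hv => by rw [min_eq_right (Finset.mem_range.1 hv).le]
    have sum_succ : ∑ t ∈ Finset.range n, (2 * ((n + 1 : ℕ) - t) - 1) * F t =
        ∑ t ∈ Finset.range n, (2 * (n - t) - 1) * F t + 2 * ∑ t ∈ Finset.range n, F t := by
      rw [Finset.mul_sum, ← Finset.sum_add_distrib]
      exact Finset.sum_congr rfl fun t _ => by push_cast; ring
    simp only [Finset.sum_range_succ, Finset.sum_add_distrib, min_left, min_right, sum_succ, ih,
      min_self]
    push_cast
    ring

theorem sum_walsh_min {e : ℕ} {r : Finset ℕ} (hr : r ⊆ Finset.range e) :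
    ∑ u ∈ Finset.range (2 ^ e), ∑ v ∈ Finset.range (2 ^ e), walsh r (min u v) =
      2 ^ e * ((if ∅ = r then 2 ^ e else 0) +
        ∑ j ∈ Finset.range e, if {j} = r then 2 ^ j else 0) := by
  have coeff_eq t (ht : t ∈ Finset.range (2 ^ e)) :
      (2 * ((2 ^ e : ℕ) - t) - 1) * walsh r t = 2 ^ e * (walsh ∅ t * walsh r t) +
        ∑ j ∈ Finset.range e, 2 ^ j * (walsh {j} t * walsh r t) := by
    simp only [walsh_empty, walsh_singleton, ← mul_assoc, ← Finset.sum_mul,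
      sum_two_pow_mul_bitSign (Finset.mem_range.1 ht)]
    push_cast
    ring
  rw [sum_range_sum_range_min, Finset.sum_congr rfl coeff_eq, Finset.sum_add_distrib,
    Finset.sum_comm]
  simp only [← Finset.mul_sum]
  rw [sum_range_two_pow_walsh_mul_walsh (Finset.empty_subset _) hr, mul_add, Finset.mul_sum]
  congr 1
  refine Finset.sum_congr rfl fun j hj => ?_
  rw [sum_range_two_pow_walsh_mul_walsh (Finset.singleton_subset_iff.2 hj) hr]
  split_ifs <;> ring

lemma sum_range_two_mul_div_two (F : ℕ → ℤ) (n : ℕ) :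
    ∑ w ∈ Finset.range (2 * n), F (w / 2) = 2 * ∑ t ∈ Finset.range n, F t := by
  induction n with
  | zero => simp
  | succ n ih =>
    have odd_div : (2 * n + 1) / 2 = n := by omega
    rw [mul_add_one, Finset.sum_range_succ, Finset.sum_range_succ, ih, Finset.sum_range_succ,
      Nat.mul_div_cancel_left n two_pos, odd_div]
    ring

theorem sum_bitSign_div_two {e j : ℕ} (hj : j < e) :
    ∑ w ∈ Finset.range (2 ^ e), bitSign j (w / 2) = if j + 1 = e then 2 ^ e else 0 := by
  obtain ⟨e, rfl⟩ := Nat.exists_eq_add_one.2 (Nat.zero_lt_of_lt hj)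
  rw [pow_succ', sum_range_two_mul_div_two]
  obtain rfl | hne := eq_or_ne j e
  · have bitSign_eq_one t (ht : t ∈ Finset.range (2 ^ j)) : bitSign j t = 1 := by
      simp [bitSign, Nat.testBit_lt_two_pow (Finset.mem_range.1 ht)]
    rw [Finset.sum_congr rfl bitSign_eq_one]
    simp [pow_succ']
  · have hj : {j} ⊆ Finset.range e := by
      rw [Finset.singleton_subset_iff, Finset.mem_range]
      omega
    have orthogonal := sum_range_two_pow_walsh_mul_walsh hj (Finset.empty_subset _)
    simp only [walsh_singleton, walsh_empty, mul_one, Finset.singleton_ne_empty, if_false]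
      at orthogonal
    rw [orthogonal, if_neg (by omega), mul_zero]

lemma sum_powerset_of_one_lt_card {α M : Type*} [AddCommMonoid M] {S : Finset α}
    {F : Finset α → M} (hF : ∀ r ⊆ S, 1 < r.card → F r = 0) :
    ∑ r ∈ S.powerset, F r = F ∅ + ∑ j ∈ S, F {j} := by
  have empty_notMem : ∅ ∉ S.powersetCard 1 := by simp [Finset.mem_powersetCard]
  have cons_subset : (S.powersetCard 1).cons ∅ empty_notMem ⊆ S.powerset := by
    rw [Finset.cons_subset]
    exact ⟨Finset.empty_mem_powerset S,
      fun r hr => Finset.mem_powerset.2 (Finset.mem_powersetCard.1 hr).1⟩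
  rw [← Finset.sum_subset cons_subset, Finset.sum_cons, Finset.powersetCard_one, Finset.sum_map]
  · rfl
  · intro r hr hr'
    rw [Finset.mem_cons, Finset.mem_powersetCard, not_or, ← Finset.card_eq_zero] at hr'
    rw [Finset.mem_powerset] at hr
    have card_ne_one : r.card ≠ 1 := fun h => hr'.2 ⟨hr, h⟩
    exact hF r hr (by omega)

theorem sum_powerset_walsh_min_pow_mul_walsh_div_two_pow (e : ℕ) {m : ℕ} (hm : m ≠ 0) (n : ℕ) :
    ∑ r ∈ (Finset.range e).powerset,
        (∑ u ∈ Finset.range (2 ^ e), ∑ v ∈ Finset.range (2 ^ e), walsh r (min u v)) ^ m *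
          (∑ w ∈ Finset.range (2 ^ e), walsh r (w / 2)) ^ n =
      (2 ^ e * 2 ^ e) ^ m * (2 ^ e) ^ n +
        ∑ j ∈ Finset.range e, (2 ^ e * 2 ^ j) ^ m * (if j + 1 = e then 2 ^ e else 0) ^ n := by
  rw [sum_powerset_of_one_lt_card]
  · congr 1
    · simp [walsh_empty]
    · refine Finset.sum_congr rfl fun j hj => ?_
      rw [sum_walsh_min (Finset.singleton_subset_iff.2 hj)]
      simp only [walsh_singleton, sum_bitSign_div_two (Finset.mem_range.1 hj),
        (Finset.singleton_ne_empty j).symm, Finset.singleton_inj, Finset.sum_ite_eq', hj, if_true,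
        if_false, zero_add]
  · intro r hr one_lt_card
    have ne_empty : ∅ ≠ r := by
      rintro rfl
      simp at one_lt_card
    have ne_singleton j : {j} ≠ r := by
      rintro rfl
      simp at one_lt_card
    simp [sum_walsh_min hr, ne_empty, ne_singleton, hm]

end WalshSums

section Quadric

variable {k A B : Type*}

/-- The exponent of `∏ a, (x_a y_a) ^ p a * ∏ b, z_b ^ (2 * p b)`, additively in `p`. -/
def quadricExponent (A B : Type*) : (A ⊕ B → ℕ) →+ ((A ⊕ A) ⊕ B → ℕ) where
  toFun p := Sum.elim (Sum.elim (fun a => p (.inl a)) fun a => p (.inl a)) fun b => 2 * p (.inr b)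
  map_zero' := by ext ((a | a) | b) <;> rfl
  map_add' p q := by ext ((a | a) | b) <;> simp [mul_add]

/-- The upper adjoint of `quadricExponent`: how often each of the monomials `x_a y_a` and `z_b ^ 2`
divides the monomial with exponent `u`. -/
def quadricPos (u : (A ⊕ A) ⊕ B → ℕ) : A ⊕ B → ℕ :=
  Sum.elim (fun a => min (u (.inl (.inl a))) (u (.inl (.inr a)))) fun b => u (.inr b) / 2

lemma gc_quadricExponent_quadricPos :
    GaloisConnection (quadricExponent A B) quadricPos := by
  intro p u
  simp only [Pi.le_def, quadricExponent, quadricPos, Sum.forall, AddMonoidHom.coe_mk,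
    ZeroHom.coe_mk, Sum.elim_inl, Sum.elim_inr, le_min_iff, forall_and,
    Nat.le_div_iff_mul_le two_pos, mul_comm]

variable [Field k] [Fintype A] [Fintype B]

lemma sum_monomialPow_quadricExponent [DecidableEq A] [DecidableEq B] :
    ∑ i, monomialPow k (quadricExponent A B (Pi.single i 1)) =
      ∑ a, X (.inl (.inl a)) * X (.inl (.inr a)) + ∑ b, X (.inr b) ^ 2 := by
  have exponent_inl (a : A) : quadricExponent A B (Pi.single (.inl a) 1) =
      Pi.single (.inl (.inl a)) 1 + Pi.single (.inl (.inr a)) 1 := by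
    ext ((a' | a') | b) <;> simp [quadricExponent, Pi.single_apply]
  have exponent_inr (b : B) : quadricExponent A B (Pi.single (.inr b) 1) =
      Pi.single (.inr b) 2 := by
    ext ((a | a) | b') <;> simp [quadricExponent, Pi.single_apply]
  simp only [Fintype.sum_sum_type, exponent_inl, exponent_inr, monomialPow_add, monomialPow_single,
    pow_one]

lemma sum_box_prod_quadricPos [DecidableEq A] [DecidableEq B] (f : ℕ → ℤ) (q : ℕ) :
    ∑ u ∈ box fun _ : (A ⊕ A) ⊕ B => q, ∏ i, f (quadricPos u i) =
      (∑ u ∈ Finset.range q, ∑ v ∈ Finset.range q, f (min u v)) ^ Fintype.card A *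
        (∑ w ∈ Finset.range q, f (w / 2)) ^ Fintype.card B := by
  rw [← Finset.sum_product', ← Finset.card_univ, ← Finset.card_univ, ← Finset.prod_const,
    ← Finset.prod_const, Finset.prod_univ_sum, Finset.prod_univ_sum, Finset.sum_mul_sum,
    ← Finset.sum_product']
  refine Finset.sum_nbij'
    (fun u => (fun a => (u (.inl (.inl a)), u (.inl (.inr a))), fun b => u (.inr b)))
    (fun p => Sum.elim (Sum.elim (fun a => (p.1 a).1) fun a => (p.1 a).2) p.2) ?_ ?_ ?_ ?_ ?_
  · simp +contextual [mem_box]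
  · simp +contextual [mem_box]
  · rintro u -
    ext ((a | a) | b) <;> rfl
  · rintro p -
    rfl
  · rintro u -
    rw [Fintype.prod_sum_type]
    rfl

theorem two_pow_mul_finrank_quotient_truncIdeal_quadric [CharP k 2] [Nonempty A] (e : ℕ) :
    (2 ^ e * Module.finrank k (MvPolynomial ((A ⊕ A) ⊕ B) k ⧸ truncIdeal (fun _ => 2 ^ e)
        (∑ a, X (.inl (.inl a)) * X (.inl (.inr a)) + ∑ b, X (.inr b) ^ 2)) : ℤ) =
      (2 ^ e * 2 ^ e) ^ Fintype.card A * (2 ^ e) ^ Fintype.card B +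
        ∑ j ∈ Finset.range e, (2 ^ e * 2 ^ j) ^ Fintype.card A *
          (if j + 1 = e then 2 ^ e else 0) ^ Fintype.card B := by
  classical
  have quadricPos_lt (u : (A ⊕ A) ⊕ B → ℕ) (hu : u ∈ box fun _ => 2 ^ e) i :
      quadricPos u i < 2 ^ e := by
    rw [mem_box] at hu
    obtain a | b := i
    · exact (min_le_left _ _).trans_lt (hu _)
    · exact (Nat.div_le_self _ _).trans_lt (hu _)
  rw [← sum_monomialPow_quadricExponent,
    finrank_quotient_truncIdeal_eq_card_nimSum gc_quadricExponent_quadricPos,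
    two_pow_mul_card_nimSum_eq_zero _ _ quadricPos_lt]
  simp only [sum_box_prod_quadricPos]
  exact sum_powerset_walsh_min_pow_mul_walsh_div_two_pow e Fintype.card_ne_zero _

end Quadric

section A1

variable {k : Type*} [Field k]

/-- The variables of `A1poly k d`, grouped into the pairs `x_{2i}, x_{2i+1}` and, when `d` is even,
the last variable `x_d`. -/
noncomputable def A1Variables (d : ℕ) :
    (Fin ((d + 1) / 2) ⊕ Fin ((d + 1) / 2)) ⊕ Fin ((d + 1) % 2) ≃ Fin (d + 1) :=
  Equiv.ofBijective
    (Sum.elim (Sum.elim (fun i => ⟨2 * i, by omega⟩) fun i => ⟨2 * i + 1, by omega⟩)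
      fun _ => ⟨d, by omega⟩) <| by
    rw [Fintype.bijective_iff_injective_and_card]
    refine ⟨?_, by simp; omega⟩
    rintro ((i | i) | i) ((j | j) | j) hij <;> have := i.2 <;> have := j.2 <;>
      simp only [Sum.elim_inl, Sum.elim_inr, Fin.mk.injEq] at hij <;>
      first | omega | (congr; omega)

lemma rename_A1Variables (d : ℕ) :
    rename (A1Variables d) (∑ a, X (.inl (.inl a)) * X (.inl (.inr a)) + ∑ b, X (.inr b) ^ 2) =
      A1poly k d := by
  simp only [map_add, map_sum, map_mul, map_pow, rename_X, A1poly]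
  congr 1
  have last_variable b : A1Variables d (.inr b) = ⟨d, by omega⟩ := rfl
  simp only [last_variable, Finset.sum_const, Finset.card_univ, Fintype.card_fin]
  split_ifs with hd
  · rw [Nat.odd_iff.1 hd.add_one, one_nsmul]
  · rw [Nat.even_iff.1 (Nat.not_even_iff_odd.1 hd).add_one, zero_nsmul]

theorem two_pow_mul_HKfun_A1poly [CharP k 2] {d : ℕ} (hd : d ≠ 0) (e : ℕ) :
    (2 ^ e * HKfun k (d + 1) 2 e (A1poly k d) : ℤ) =
      (2 ^ e * 2 ^ e) ^ ((d + 1) / 2) * (2 ^ e) ^ ((d + 1) % 2) +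
        ∑ j ∈ Finset.range e, (2 ^ e * 2 ^ j) ^ ((d + 1) / 2) *
          (if j + 1 = e then 2 ^ e else 0) ^ ((d + 1) % 2) := by
  have : NeZero ((d + 1) / 2) := ⟨by omega⟩
  have HKfun_eq : HKfun k (d + 1) 2 e (A1poly k d) = Module.finrank k
      (MvPolynomial (Fin (d + 1)) k ⧸ truncIdeal (fun _ => 2 ^ e) (A1poly k d)) := rfl
  rw [HKfun_eq, ← rename_A1Variables, finrank_quotient_truncIdeal_rename]
  simpa only [Fintype.card_fin, Function.comp_def] using
    two_pow_mul_finrank_quotient_truncIdeal_quadric (k := k) (A := Fin ((d + 1) / 2))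
      (B := Fin ((d + 1) % 2)) e

theorem HKfun_A1poly_odd_div [CharP k 2] (m e : ℕ) :
    (HKfun k (2 * m + 1 + 1) 2 e (A1poly k (2 * m + 1)) : ℝ) / 2 ^ ((2 * m + 1) * e) =
      1 + (1 - (1 / 2 ^ (m + 1)) ^ e) / (2 ^ (m + 1) - 1) := by
  have half : (2 * m + 1 + 1) / 2 = m + 1 := by omega
  have parity : (2 * m + 1 + 1) % 2 = 0 := by omega
  have formula := congrArg (Int.cast (R := ℝ)) <|
    two_pow_mul_HKfun_A1poly (k := k) (d := 2 * m + 1) (by omega) e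
  simp only [half, parity, pow_zero, mul_one, mul_pow (2 ^ e : ℤ), ← Finset.mul_sum, ← pow_mul,
    mul_comm _ (m + 1)] at formula
  simp only [pow_mul] at formula
  push_cast at formula
  have one_lt : (1 : ℝ) < 2 ^ (m + 1) := one_lt_pow₀ one_lt_two (by omega)
  have denominator : (2 : ℝ) ^ e * 2 ^ ((2 * m + 1) * e) =
      (2 ^ (m + 1)) ^ e * (2 ^ (m + 1)) ^ e := by ring
  have sub_one_ne_zero : (2 : ℝ) ^ (m + 1) - 1 ≠ 0 := (sub_pos.2 one_lt).ne'
  rw [geom_sum_eq one_lt.ne'] at formula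
  rw [← mul_div_mul_left _ _ (pow_ne_zero e two_ne_zero), formula, denominator, one_div, inv_pow]
  field_simp

theorem HKfun_A1poly_even_div [CharP k 2] {m : ℕ} (hm : m ≠ 0) (e : ℕ) :
    (HKfun k (2 * m + 1) 2 (e + 1) (A1poly k (2 * m)) : ℝ) / 2 ^ (2 * m * (e + 1)) =
      (2 ^ m + 1) / 2 ^ m := by
  have half : (2 * m + 1) / 2 = m := by omega
  have parity : (2 * m + 1) % 2 = 1 := by omega
  have formula := congrArg (Int.cast (R := ℝ)) <|
    two_pow_mul_HKfun_A1poly (k := k) (d := 2 * m) (by omega) (e + 1)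
  simp only [half, parity, pow_one, add_left_inj, mul_ite, mul_zero, Finset.sum_ite_eq',
    Finset.mem_range, lt_add_one, if_true, ← pow_add, ← pow_mul] at formula
  push_cast at formula
  rw [← mul_div_mul_left _ _ (pow_ne_zero (e + 1) two_ne_zero), formula,
    div_eq_div_iff (by positivity) (by positivity)]
  ring

theorem tendsto_HKfun_A1poly_odd [CharP k 2] (m : ℕ) :
    Filter.Tendsto
      (fun e => (HKfun k (2 * m + 1 + 1) 2 e (A1poly k (2 * m + 1)) : ℝ) / 2 ^ ((2 * m + 1) * e))
      Filter.atTop (nhds (2 ^ (m + 1) / (2 ^ (m + 1) - 1))) := by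
  have one_lt : (1 : ℝ) < 2 ^ (m + 1) := one_lt_pow₀ one_lt_two (by omega)
  have sub_one_ne_zero : (2 : ℝ) ^ (m + 1) - 1 ≠ 0 := (sub_pos.2 one_lt).ne'
  have tendsto_zero : Filter.Tendsto (fun e : ℕ => (1 / 2 ^ (m + 1) : ℝ) ^ e) Filter.atTop
      (nhds 0) :=
    tendsto_pow_atTop_nhds_zero_of_lt_one (by positivity) ((div_lt_one (by positivity)).2 one_lt)
  have limit_eq : (2 : ℝ) ^ (m + 1) / (2 ^ (m + 1) - 1) = 1 + (1 - 0) / (2 ^ (m + 1) - 1) := by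
    field_simp
    ring
  simp only [HKfun_A1poly_odd_div, limit_eq]
  exact ((tendsto_zero.const_sub 1).div_const _).const_add 1

theorem tendsto_HKfun_A1poly_even [CharP k 2] {m : ℕ} (hm : m ≠ 0) :
    Filter.Tendsto (fun e => (HKfun k (2 * m + 1) 2 e (A1poly k (2 * m)) : ℝ) / 2 ^ (2 * m * e))
      Filter.atTop (nhds ((2 ^ m + 1) / 2 ^ m)) := by
  rw [← Filter.tendsto_add_atTop_iff_nat 1]
  simp only [HKfun_A1poly_even_div hm]
  exact tendsto_const_nhds

end A1

/-- The Hilbert–Kunz multiplicity of the `A₁` singularity in characteristic 2 exists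
and equals `2^m/(2^m − 1)` if `d = 2m − 1` is odd, and `(2^m + 1)/2^m` if `d = 2m` is even. -/
theorem eHK_A1_char_two (k : Type*) [Field k] [CharP k 2] (d : ℕ) (hd : 1 ≤ d) :
    ∃ L : ℝ,
      Filter.Tendsto
        (fun e : ℕ => (HKfun k (d + 1) 2 e (A1poly k d) : ℝ) / 2 ^ (d * e))
        Filter.atTop (nhds L) ∧
      (∀ m : ℕ, d = 2 * m - 1 → L = 2 ^ m / (2 ^ m - 1)) ∧
      (∀ m : ℕ, d = 2 * m → L = (2 ^ m + 1) / 2 ^ m) := by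
  obtain ⟨m, rfl | rfl⟩ := Nat.even_or_odd' d
  · refine ⟨_, tendsto_HKfun_A1poly_even (by omega), fun m' h => ?_, fun m' h => ?_⟩
    · omega
    · rw [Nat.mul_left_cancel two_pos h]
  · refine ⟨_, tendsto_HKfun_A1poly_odd m, fun m' h => ?_, fun m' h => ?_⟩
    · obtain rfl : m' = m + 1 := by omega
      rfl
    · omega
end
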